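/- arXiv:2604.22267 — 2 statements merged into one kernel-verified Lean document; each statement's English description precedes it below -/
import Mathlib

section
/- Let q be a real number with 0 < q < 1 and let x, y be nonzero complex numbers such that x·q^{10n} ≠ 1 and y·q^{10n} ≠ 1 for every integer n. Then (∑_{n∈ℤ} [x q^{10n}/(1 − x q^{10n})² − y q^{10n}/(1 − y q^{10n})²]) · f(−x, −q^{10}/x)² · f(−y, −q^{10}/y)² = x · f(−xy, −q^{10}/(xy)) · f(−y/x, −x q^{10}/y) · ((q^{10}; q^{10})∞)⁶. -/
/-- Ramanujan's theta function `f(a,b) = ∑_{n ∈ ℤ} a^(n(n+1)/2) b^(n(n-1)/2)`. -/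
noncomputable def ramTheta (a b : ℂ) : ℂ :=
  ∑' n : ℤ, a ^ ((n * (n + 1)) / 2).toNat * b ^ ((n * (n - 1)) / 2).toNat

/-- `φ(q) = f(q,q)`. -/
noncomputable def phi (q : ℂ) : ℂ := ramTheta q q

/-- `ψ(q) = f(q,q³)`. -/
noncomputable def psi (q : ℂ) : ℂ := ramTheta q (q ^ 3)

/-- `(a;q)_∞ = ∏_{k=0}^∞ (1 - a q^k)`. -/
noncomputable def qPochInf (a q : ℂ) : ℂ := ∏' k : ℕ, (1 - a * q ^ k)

/-! Write `θ(x) = f(-x, -p/x) = ∑ t n` with `t n = p^(n(n-1)/2) (-x)^n`. Sorting the pairs `(m, n)`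
by the parity of `m - n` shows that, for every weight `w`,
`∑ w (m - n) * t m * t n = x * (W₀ * θ_odd(x) - W₁ * θ_even(x))`, where `W₀, W₁` depend only on `w`.

* With `w d = y^d` the left side is `θ(xy) θ(x/y)`, and `W₀ = θ_even(y)`, `W₁ = θ_odd(y)`.
* With `w d = d²` it is `-2 ((Dθ)² - θ D²θ)` for `D = x d/dx`, which the Jacobi triple product turns
  into `-2 θ(x)² ∑ x pⁿ / (1 - x pⁿ)²`, and into `-2 (p; p)_∞⁶` at `x = 1`.

So `θ²` and `θ² ∑ x pⁿ / (1 - x pⁿ)²` are both combinations of `x θ_odd` and `x θ_even`, and the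
identity is the multiplicativity of `2 × 2` determinants. The infinite product is never
differentiated: the moments `∑ n^k t n` are limits of those of the finite triple product, where
each factor `1 - a T^(±1)` acts on them explicitly.
-/

open Filter Topology

section Moments

variable {𝕜 : Type*} [NormedField 𝕜]

/-- The `k`-th moment of a bilateral sequence, i.e. `(T d/dT)^k` of its generating Laurent series
`∑ c n T^n`, evaluated at `T = 1`. -/
noncomputable def moment (c : ℤ → 𝕜) (k : ℕ) : 𝕜 := ∑' n : ℤ, (n : 𝕜) ^ k * c n

/-- The sequence has absolutely convergent moments of all orders. -/
def HasMoments (c : ℤ → 𝕜) : Prop := ∀ k : ℕ, Summable fun n : ℤ ↦ ‖(n : 𝕜) ^ k * c n‖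

/-- Coefficients of `(1 - a T^e) ∑ c n T^n`. -/
noncomputable def mulOneSub (a : 𝕜) (e : ℤ) (c : ℤ → 𝕜) (n : ℤ) : 𝕜 := c n - a * c (n - e)

/-- `(D F)² - F · D² F = -F² · D² log F` for `D = T d/dT`, evaluated at `T = 1`, where `F` is the
generating Laurent series of the sequence. -/
noncomputable def logCurvature (c : ℤ → 𝕜) : 𝕜 := moment c 1 ^ 2 - moment c 0 * moment c 2

/-- The Koebe function `-(z d/dz)² log (1 - z)`, the contribution of a factor `1 - z` to
`logCurvature`. -/
noncomputable def koebe (z : 𝕜) : 𝕜 := z / (1 - z) ^ 2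

lemma moment_zero (c : ℤ → 𝕜) : moment c 0 = ∑' n : ℤ, c n := by
  simp only [moment, pow_zero, one_mul]

variable {c : ℤ → 𝕜}

lemma HasMoments.mul_bounded {w : ℤ → 𝕜} {C : ℝ} (hc : HasMoments c) (hw : ∀ n, ‖w n‖ ≤ C) :
    HasMoments fun n ↦ w n * c n := fun k ↦ by
  refine .of_nonneg_of_le (fun _ ↦ norm_nonneg _) (fun n ↦ ?_) ((hc k).mul_left C)
  rw [mul_left_comm, norm_mul]
  gcongr
  exact hw n

variable [CompleteSpace 𝕜]

lemma HasMoments.hasSum (hc : HasMoments c) (k : ℕ) :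
    HasSum (fun n : ℤ ↦ (n : 𝕜) ^ k * c n) (moment c k) :=
  (hc k).of_norm.hasSum

lemma HasMoments.hasSum_shift (hc : HasMoments c) (e : ℤ) (k : ℕ) :
    HasSum (fun n : ℤ ↦ (n : 𝕜) ^ k * c (n - e))
      (∑ j ∈ Finset.range (k + 1), (e : 𝕜) ^ (k - j) * k.choose j * moment c j) := by
  have h : HasSum (fun n : ℤ ↦ ∑ j ∈ Finset.range (k + 1),
      (e : 𝕜) ^ (k - j) * k.choose j * ((n : 𝕜) ^ j * c n))
      (∑ j ∈ Finset.range (k + 1), (e : 𝕜) ^ (k - j) * k.choose j * moment c j) :=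
    hasSum_sum fun j _ ↦ (hc.hasSum j).mul_left _
  refine (Equiv.addRight e).hasSum_iff.mp ?_
  convert h using 1
  ext n
  simp only [Function.comp_apply, Equiv.coe_addRight, add_sub_cancel_right, Int.cast_add, add_pow,
    Finset.sum_mul]
  exact Finset.sum_congr rfl fun j _ ↦ by ring

lemma HasMoments.moment_mulOneSub (hc : HasMoments c) (a : 𝕜) (e : ℤ) (k : ℕ) :
    moment (mulOneSub a e c) k = moment c k
      - a * ∑ j ∈ Finset.range (k + 1), (e : 𝕜) ^ (k - j) * k.choose j * moment c j := by
  rw [← ((hc.hasSum k).sub ((hc.hasSum_shift e k).mul_left a)).tsum_eq]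
  exact tsum_congr fun n ↦ by rw [mulOneSub]; ring

lemma HasMoments.moment_zero_mulOneSub (hc : HasMoments c) (a : 𝕜) (e : ℤ) :
    moment (mulOneSub a e c) 0 = (1 - a) * moment c 0 := by
  simp [hc.moment_mulOneSub, sub_mul]

lemma HasMoments.moment_one_mulOneSub (hc : HasMoments c) (a : 𝕜) (e : ℤ) :
    moment (mulOneSub a e c) 1 = (1 - a) * moment c 1 - a * e * moment c 0 := by
  simp only [hc.moment_mulOneSub, Finset.sum_range_succ]
  simp only [Finset.range_zero, Finset.sum_empty, tsub_zero, pow_one, Nat.choose_succ_self_right,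
    zero_add, Nat.cast_one, mul_one, tsub_self, pow_zero, Nat.choose_self, one_mul]
  ring

lemma HasMoments.logCurvature_mulOneSub (hc : HasMoments c) (a : 𝕜) (e : ℤ) :
    logCurvature (mulOneSub a e c) =
      (1 - a) ^ 2 * logCurvature c + a * (e : 𝕜) ^ 2 * moment c 0 ^ 2 := by
  simp only [logCurvature, hc.moment_mulOneSub, Finset.sum_range_succ]
  simp only [Finset.range_zero, Finset.sum_empty, tsub_zero, pow_one, Nat.choose_succ_self_right,
    zero_add, Nat.cast_one, mul_one, tsub_self, pow_zero, Nat.choose_self, one_mul, zero_tsub,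
    Nat.choose_zero_right, Nat.add_one_sub_one, Nat.reduceAdd, Nat.cast_ofNat]
  ring

lemma HasMoments.logCurvature_mulOneSub_of_eq {a S : 𝕜} {e : ℤ} (hc : HasMoments c)
    (ha : a ≠ 1) (he : e ^ 2 = 1) (hS : logCurvature c = moment c 0 ^ 2 * S) :
    logCurvature (mulOneSub a e c) = moment (mulOneSub a e c) 0 ^ 2 * (S + koebe a) := by
  have ha' : 1 - a ≠ 0 := sub_ne_zero.mpr ha.symm
  have he' : (e : 𝕜) ^ 2 = 1 := by rw [← Int.cast_pow, he, Int.cast_one]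
  rw [hc.logCurvature_mulOneSub, hc.moment_zero_mulOneSub, hS, koebe, he']
  field_simp

lemma HasMoments.hasSum_sub_sq_mul (hc : HasMoments c) :
    HasSum (fun z : ℤ × ℤ ↦ ((z.1 - z.2 : ℤ) : 𝕜) ^ 2 * (c z.1 * c z.2)) (-2 * logCurvature c) := by
  have hprod (j k : ℕ) : HasSum (fun z : ℤ × ℤ ↦ ((z.1 : 𝕜) ^ j * c z.1) * ((z.2 : 𝕜) ^ k * c z.2))
      (moment c j * moment c k) := by
    rw [moment, moment, tsum_mul_tsum_of_summable_norm (hc j) (hc k)]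
    exact (summable_mul_of_summable_norm (hc j) (hc k)).hasSum
  have h : HasSum (fun z : ℤ × ℤ ↦ ((z.1 : 𝕜) ^ 2 * c z.1) * ((z.2 : 𝕜) ^ 0 * c z.2)
      - 2 * (((z.1 : 𝕜) ^ 1 * c z.1) * ((z.2 : 𝕜) ^ 1 * c z.2))
      + ((z.1 : 𝕜) ^ 0 * c z.1) * ((z.2 : 𝕜) ^ 2 * c z.2))
      (moment c 2 * moment c 0 - 2 * (moment c 1 * moment c 1) + moment c 0 * moment c 2) :=
    ((hprod 2 0).sub ((hprod 1 1).mul_left 2)).add (hprod 0 2)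
  convert h using 1
  · ext z
    push_cast
    ring
  · rw [logCurvature]
    ring

lemma tendsto_moment_mul {ι : Type*} {l : Filter ι} {w : ι → ℤ → 𝕜} {w₀ : 𝕜} {C : ℝ}
    (hc : HasMoments c) (hC : ∀ i n, ‖w i n‖ ≤ C) (hw : ∀ n, Tendsto (w · n) l (𝓝 w₀)) (k : ℕ) :
    Tendsto (fun i ↦ moment (fun n ↦ w i n * c n) k) l (𝓝 (w₀ * moment c k)) := by
  rw [moment, ← tsum_mul_left]
  refine tendsto_tsum_of_dominated_convergence ((hc k).mul_left C) (fun n ↦ ?_)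
    (.of_forall fun i n ↦ ?_)
  · simpa only [mul_left_comm] using (hw n).mul_const ((n : 𝕜) ^ k * c n)
  · rw [mul_left_comm, norm_mul]
    gcongr
    exact hC i n

end Moments

section QPochhammer

/-- The finite `q`-Pochhammer symbol `(a; q)_N`. -/
noncomputable def qPoch (a q : ℂ) (N : ℕ) : ℂ := ∏ k ∈ Finset.range N, (1 - a * q ^ k)

@[simp] lemma qPoch_zero (a q : ℂ) : qPoch a q 0 = 1 := Finset.prod_range_zero _

lemma qPoch_succ (a q : ℂ) (N : ℕ) : qPoch a q (N + 1) = qPoch a q N * (1 - a * q ^ N) :=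
  Finset.prod_range_succ _ _

lemma qPoch_one_succ (q : ℂ) (N : ℕ) : qPoch 1 q (N + 1) = 0 :=
  Finset.prod_eq_zero (Finset.mem_range.mpr N.succ_pos) (by simp)

lemma qPochInf_one (q : ℂ) : qPochInf 1 q = 0 :=
  tprod_of_exists_eq_zero ⟨0, by simp⟩

variable {q : ℂ}

lemma summable_norm_mul_pow (a : ℂ) (hq : ‖q‖ < 1) : Summable fun k : ℕ ↦ ‖-(a * q ^ k)‖ := by
  simpa only [norm_neg, norm_mul, norm_pow] using
    (summable_geometric_of_lt_one (norm_nonneg q) hq).mul_left ‖a‖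

lemma tendsto_qPoch (a : ℂ) (hq : ‖q‖ < 1) :
    Tendsto (qPoch a q) atTop (𝓝 (qPochInf a q)) := by
  have h : Multipliable fun k : ℕ ↦ 1 - a * q ^ k := by
    simpa only [sub_eq_add_neg] using
      multipliable_one_add_of_summable (summable_norm_mul_pow a hq)
  exact h.hasProd.tendsto_prod_nat

lemma one_sub_mul_pow_ne_zero (hq : ‖q‖ < 1) (k : ℕ) : 1 - q * q ^ k ≠ 0 := by
  rw [← pow_succ', sub_ne_zero]
  intro h
  have hlt : ‖q ^ (k + 1)‖ < 1 := by
    rw [norm_pow]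
    exact pow_lt_one₀ (norm_nonneg q) hq k.succ_ne_zero
  rw [← h, norm_one] at hlt
  exact lt_irrefl _ hlt

lemma qPochInf_self_ne_zero (hq : ‖q‖ < 1) : qPochInf q q ≠ 0 := by
  simpa only [qPochInf, sub_eq_add_neg] using tprod_one_add_ne_zero_of_summable
    (f := fun k ↦ -(q * q ^ k))
    (by simpa only [← sub_eq_add_neg] using one_sub_mul_pow_ne_zero hq)
    (summable_norm_mul_pow q hq)

/-- `1 / (q; q)_k`, with the usual convention that it vanishes for `k < 0`. -/
noncomputable def qPochInv (q : ℂ) (k : ℤ) : ℂ := if k < 0 then 0 else (qPoch q q k.toNat)⁻¹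

@[simp] lemma qPochInv_natCast (q : ℂ) (k : ℕ) : qPochInv q k = (qPoch q q k)⁻¹ := by
  simp [qPochInv]

lemma qPochInv_of_neg (q : ℂ) {k : ℤ} (hk : k < 0) : qPochInv q k = 0 := if_pos hk

lemma qPochInv_sub_one (hq : ‖q‖ < 1) (k : ℤ) :
    qPochInv q (k - 1) = (1 - q ^ k) * qPochInv q k := by
  rcases lt_trichotomy k 0 with hk | rfl | hk
  · rw [qPochInv_of_neg q hk, qPochInv_of_neg q (by lia), mul_zero]
  · rw [qPochInv_of_neg q (by lia), zpow_zero, sub_self, zero_mul]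
  · obtain ⟨m, rfl⟩ : ∃ m : ℕ, k = (m + 1 : ℕ) := ⟨(k - 1).toNat, by lia⟩
    rw [zpow_natCast, pow_succ', qPochInv_natCast, Nat.cast_add_one, add_sub_cancel_right,
      qPochInv_natCast, qPoch_succ, mul_inv, mul_left_comm,
      mul_inv_cancel₀ (one_sub_mul_pow_ne_zero hq m), mul_one]

lemma tendsto_qPochInv (hq : ‖q‖ < 1) :
    Tendsto (qPochInv q) atTop (𝓝 (qPochInf q q)⁻¹) := by
  rw [← Nat.map_cast_int_atTop, tendsto_map'_iff]
  simpa only [Function.comp_def, qPochInv_natCast] using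
    (tendsto_qPoch q hq).inv₀ (qPochInf_self_ne_zero hq)

lemma exists_norm_qPochInv_le (hq : ‖q‖ < 1) : ∃ C, ∀ k, ‖qPochInv q k‖ ≤ C := by
  obtain ⟨C, hC⟩ := ((tendsto_qPochInv hq).comp tendsto_natCast_atTop_atTop).norm.bddAbove_range
  have hC' (k : ℕ) : ‖qPochInv q k‖ ≤ C := hC ⟨k, rfl⟩
  refine ⟨C, fun k ↦ ?_⟩
  rcases lt_or_ge k 0 with hk | hk
  · rw [qPochInv_of_neg q hk, norm_zero]
    exact (norm_nonneg _).trans (hC' 0)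
  · lift k to ℕ using hk
    exact hC' k

/-- The Gaussian binomial coefficient, vanishing unless `0 ≤ k ≤ m`. -/
noncomputable def qBinom (q : ℂ) (m : ℕ) (k : ℤ) : ℂ :=
  qPoch q q m * qPochInv q k * qPochInv q (m - k)

lemma qBinom_zero_left (q : ℂ) (k : ℤ) : qBinom q 0 k = if k = 0 then 1 else 0 := by
  rcases lt_trichotomy k 0 with hk | rfl | hk
  · rw [qBinom, qPochInv_of_neg q hk, if_neg hk.ne, mul_zero, zero_mul]
  · simp [qBinom, qPochInv]
  · rw [qBinom, qPochInv_of_neg q (by lia : ((0 : ℕ) : ℤ) - k < 0), if_neg hk.ne', mul_zero]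

lemma qBinom_succ (hq₀ : q ≠ 0) (hq : ‖q‖ < 1) (m : ℕ) (k : ℤ) :
    qBinom q (m + 1) k = qBinom q m k + q ^ (m + 1 - k) * qBinom q m (k - 1) := by
  have hpow : q * q ^ m = q ^ (m + 1 - k) * q ^ k := by
    rw [← zpow_add₀ hq₀, sub_add_cancel, ← Nat.cast_add_one, zpow_natCast, pow_succ']
  have hk := qPochInv_sub_one hq k
  have hmk := qPochInv_sub_one hq (m + 1 - k)
  rw [show (m : ℤ) + 1 - k - 1 = m - k by ring] at hmk
  rw [qBinom, qBinom, qBinom, qPoch_succ, hpow, show (m : ℤ) - (k - 1) = m + 1 - k by ring, hk,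
    hmk, Nat.cast_add_one]
  ring

lemma qBinom_symm (q : ℂ) (m : ℕ) (k : ℤ) : qBinom q m (m - k) = qBinom q m k := by
  rw [qBinom, qBinom, sub_sub_cancel, mul_right_comm]

lemma qBinom_succ' (hq₀ : q ≠ 0) (hq : ‖q‖ < 1) (m : ℕ) (k : ℤ) :
    qBinom q (m + 1) k = qBinom q m (k - 1) + q ^ k * qBinom q m k := by
  rw [← qBinom_symm, qBinom_succ hq₀ hq, Nat.cast_add_one, sub_sub_cancel,
    ← qBinom_symm q m (k - 1), ← qBinom_symm q m k, sub_sub_eq_add_sub, sub_right_comm,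
    add_sub_cancel_right]

lemma exists_norm_qBinom_le (hq : ‖q‖ < 1) : ∃ C, ∀ m k, ‖qBinom q m k‖ ≤ C := by
  obtain ⟨A, hA⟩ := (tendsto_qPoch q hq).norm.bddAbove_range
  obtain ⟨B, hB⟩ := exists_norm_qPochInv_le hq
  refine ⟨A * B * B, fun m k ↦ ?_⟩
  have hAm : ‖qPoch q q m‖ ≤ A := hA ⟨m, rfl⟩
  have hA₀ : 0 ≤ A := (norm_nonneg _).trans hAm
  have hB₀ : 0 ≤ B := (norm_nonneg _).trans (hB 0)
  rw [qBinom, norm_mul, norm_mul]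
  gcongr
  exacts [hB _, hB _]

lemma tendsto_qBinom {ι : Type*} {l : Filter ι} {M N : ι → ℕ} (hq : ‖q‖ < 1)
    (hM : Tendsto M l atTop) (hN : Tendsto N l atTop) (n : ℤ) :
    Tendsto (fun i ↦ qBinom q (M i + N i) (N i + n)) l (𝓝 (qPochInf q q)⁻¹) := by
  have hM' : Tendsto (fun i ↦ (M i : ℤ) - n) l atTop :=
    tendsto_atTop_add_const_right _ _ (tendsto_natCast_atTop_atTop.comp hM)
  have hN' : Tendsto (fun i ↦ (N i : ℤ) + n) l atTop :=
    tendsto_atTop_add_const_right _ _ (tendsto_natCast_atTop_atTop.comp hN)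
  have h := (((tendsto_qPoch q hq).comp (hM.atTop_add_atTop hN)).mul
    ((tendsto_qPochInv hq).comp hN')).mul ((tendsto_qPochInv hq).comp hM')
  rw [mul_inv_cancel₀ (qPochInf_self_ne_zero hq), one_mul] at h
  refine h.congr fun i ↦ ?_
  simp only [Function.comp_apply, qBinom]
  congr 2
  push_cast
  ring

end QPochhammer

section ThetaSeries

/-- The coefficients of the Jacobi theta series `∑ p^(n(n-1)/2) (-x)^n`, with nome `p`. -/
noncomputable def thetaTerm (p x : ℂ) (n : ℤ) : ℂ := p ^ (n * (n - 1) / 2) * (-x) ^ n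

/-- The Jacobi theta function with simple zeros at the integral powers of `p`; it is
Ramanujan's `f(-x, -p/x)`. -/
noncomputable def theta (p x : ℂ) : ℂ := ∑' n : ℤ, thetaTerm p x n

lemma two_mul_triangular (n : ℤ) : 2 * (n * (n - 1) / 2) = n * (n - 1) :=
  Int.mul_ediv_cancel' (Int.even_mul_pred_self n).two_dvd

lemma triangular_add_one (n : ℤ) : (n + 1) * n / 2 = n * (n - 1) / 2 + n := by
  have h := two_mul_triangular (n + 1)
  rw [add_sub_cancel_right] at h
  linarith [two_mul_triangular n]

lemma triangular_nonneg (n : ℤ) : 0 ≤ n * (n - 1) / 2 := by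
  refine Int.ediv_nonneg ?_ two_pos.le
  rcases le_or_gt n 0 with hn | hn <;> nlinarith

variable {p x : ℂ}

lemma thetaTerm_add_one (hp₀ : p ≠ 0) (hx : x ≠ 0) (n : ℤ) :
    thetaTerm p x (n + 1) = -(x * p ^ n) * thetaTerm p x n := by
  rw [thetaTerm, thetaTerm, add_sub_cancel_right, triangular_add_one, zpow_add₀ hp₀,
    zpow_add_one₀ (neg_ne_zero.mpr hx)]
  ring

lemma thetaTerm_mul (p x y : ℂ) (n : ℤ) : thetaTerm p (x * y) n = y ^ n * thetaTerm p x n := by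
  rw [thetaTerm, thetaTerm, ← neg_mul, mul_zpow]
  ring

lemma ramTheta_neg_neg_div (hp₀ : p ≠ 0) (hx : x ≠ 0) :
    ramTheta (-x) (-(p / x)) = theta p x := by
  refine tsum_congr fun n ↦ ?_
  have hx' : -x ≠ 0 := neg_ne_zero.mpr hx
  have htri : 0 ≤ (n + 1) * n / 2 := by
    simpa only [add_sub_cancel_right] using triangular_nonneg (n + 1)
  rw [mul_comm n (n + 1), ← zpow_natCast, ← zpow_natCast, Int.toNat_of_nonneg htri,
    Int.toNat_of_nonneg (triangular_nonneg n), triangular_add_one, ← div_neg, div_zpow,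
    zpow_add₀ hx', thetaTerm]
  field_simp

lemma exists_jacobiTheta₂_term_eq (hp₀ : p ≠ 0) (hp : ‖p‖ < 1) (hx : x ≠ 0) :
    ∃ z τ : ℂ, 0 < τ.im ∧ ∀ n : ℤ, jacobiTheta₂_term n z τ = thetaTerm p x n := by
  refine ⟨(Complex.log (-x) - Complex.log p / 2) / (2 * Real.pi * Complex.I),
    Complex.log p / (2 * Real.pi * Complex.I), ?_, fun n ↦ ?_⟩
  · simpa only [Function.Periodic.invQParam, Complex.ofReal_one, one_mul, one_div_mul_eq_div] using
      Function.Periodic.im_invQParam_pos_of_norm_lt_one one_pos hp hp₀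
  · have htri : (2 : ℂ) * (n * (n - 1) / 2 : ℤ) = n * (n - 1) := mod_cast two_mul_triangular n
    rw [jacobiTheta₂_term, thetaTerm]
    nth_rewrite 3 [← Complex.exp_log hp₀]
    nth_rewrite 2 [← Complex.exp_log (neg_ne_zero.mpr hx)]
    rw [← Complex.exp_int_mul, ← Complex.exp_int_mul, ← Complex.exp_add]
    congr 1
    field_simp
    linear_combination -Complex.log p * htri

lemma hasMoments_thetaTerm (hp₀ : p ≠ 0) (hp : ‖p‖ < 1) (hx : x ≠ 0) :
    HasMoments (thetaTerm p x) := by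
  obtain ⟨z, τ, hτ, hterm⟩ := exists_jacobiTheta₂_term_eq hp₀ hp hx
  intro k
  refine .of_nonneg_of_le (fun _ ↦ norm_nonneg _) (fun n ↦ ?_)
    (summable_pow_mul_jacobiTheta₂_term_bound |z.im| hτ k)
  rw [← hterm, norm_mul, norm_pow, Complex.norm_intCast, ← Int.cast_abs]
  gcongr
  exact norm_jacobiTheta₂_term_le hτ le_rfl le_rfl n

end ThetaSeries

section FiniteTripleProduct

/-- The coefficients of the finite theta product `(x T; p)_M (p / (x T); p)_N`, as given by the
`q`-binomial theorem. -/
noncomputable def finTheta (p x : ℂ) (M N : ℕ) (n : ℤ) : ℂ :=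
  qBinom p (M + N) (N + n) * thetaTerm p x n

variable {p x : ℂ}

lemma hasMoments_finTheta (hp₀ : p ≠ 0) (hp : ‖p‖ < 1) (hx : x ≠ 0) (M N : ℕ) :
    HasMoments (finTheta p x M N) := by
  obtain ⟨C, hC⟩ := exists_norm_qBinom_le hp
  exact (hasMoments_thetaTerm hp₀ hp hx).mul_bounded fun n ↦ hC _ _

lemma finTheta_zero_zero (p x : ℂ) : finTheta p x 0 0 = Pi.single 0 1 := by
  ext n
  rcases eq_or_ne n 0 with rfl | hn
  · simp [finTheta, qBinom_zero_left, thetaTerm]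
  · simp [finTheta, qBinom_zero_left, hn]

lemma finTheta_succ_left (hp₀ : p ≠ 0) (hp : ‖p‖ < 1) (hx : x ≠ 0) (M N : ℕ) :
    finTheta p x (M + 1) N = mulOneSub (x * p ^ M) 1 (finTheta p x M N) := by
  ext n
  have hterm := thetaTerm_add_one hp₀ hx (n - 1)
  have hpow : p ^ (((M + N : ℕ) : ℤ) + 1 - (N + n)) * p ^ (n - 1) = p ^ M := by
    rw [← zpow_add₀ hp₀, ← zpow_natCast]
    push_cast
    ring_nf
  rw [sub_add_cancel] at hterm
  rw [mulOneSub, finTheta, finTheta, finTheta, Nat.succ_add_eq_add_succ, Nat.add_succ,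
    Nat.succ_eq_add_one, qBinom_succ hp₀ hp, ← add_sub_assoc, ← hpow, hterm]
  ring

lemma finTheta_succ_right (hp₀ : p ≠ 0) (hp : ‖p‖ < 1) (hx : x ≠ 0) (M N : ℕ) :
    finTheta p x M (N + 1) = mulOneSub (p / x * p ^ N) (-1) (finTheta p x M N) := by
  ext n
  have hterm := thetaTerm_add_one hp₀ hx n
  have hpow : p ^ ((N : ℤ) + 1 + n) = p * p ^ N * p ^ n := by
    rw [zpow_add₀ hp₀, zpow_add_one₀ hp₀, zpow_natCast]
    ring
  rw [mulOneSub, finTheta, finTheta, finTheta, ← add_assoc, Nat.cast_add_one,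
    qBinom_succ' hp₀ hp, sub_neg_eq_add, hterm, hpow, add_right_comm (N : ℤ) 1 n,
    add_sub_cancel_right, ← add_assoc]
  field_simp
  ring

lemma moment_finTheta_zero_zero (p x : ℂ) (k : ℕ) : moment (finTheta p x 0 0) k = 0 ^ k := by
  rw [finTheta_zero_zero, moment, tsum_eq_single 0 fun n hn ↦ by simp [hn]]
  simp

lemma moment_zero_finTheta (hp₀ : p ≠ 0) (hp : ‖p‖ < 1) (hx : x ≠ 0) (M N : ℕ) :
    moment (finTheta p x M N) 0 = qPoch x p M * qPoch (p / x) p N := by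
  induction N with
  | zero =>
    induction M with
    | zero => simp [moment_finTheta_zero_zero]
    | succ M ih =>
      rw [finTheta_succ_left hp₀ hp hx, (hasMoments_finTheta hp₀ hp hx M 0).moment_zero_mulOneSub,
        ih, qPoch_succ]
      ring
  | succ N ih =>
    rw [finTheta_succ_right hp₀ hp hx, (hasMoments_finTheta hp₀ hp hx M N).moment_zero_mulOneSub,
      ih, qPoch_succ]
    ring

lemma moment_one_finTheta_one (hp₀ : p ≠ 0) (hp : ‖p‖ < 1) (M N : ℕ) :
    moment (finTheta p 1 (M + 1) N) 1 = -(qPoch p p M * qPoch p p N) := by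
  have hzero (M N : ℕ) : moment (finTheta p 1 (M + 1) N) 0 = 0 := by
    rw [moment_zero_finTheta hp₀ hp one_ne_zero, qPoch_one_succ, zero_mul]
  induction N with
  | zero =>
    induction M with
    | zero =>
      rw [finTheta_succ_left hp₀ hp one_ne_zero,
        (hasMoments_finTheta hp₀ hp one_ne_zero 0 0).moment_one_mulOneSub]
      simp [moment_finTheta_zero_zero]
    | succ M ih =>
      rw [finTheta_succ_left hp₀ hp one_ne_zero,
        (hasMoments_finTheta hp₀ hp one_ne_zero (M + 1) 0).moment_one_mulOneSub, ih, hzero,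
        qPoch_succ]
      ring
  | succ N ih =>
    rw [finTheta_succ_right hp₀ hp one_ne_zero,
      (hasMoments_finTheta hp₀ hp one_ne_zero (M + 1) N).moment_one_mulOneSub, ih, hzero, div_one,
      qPoch_succ]
    ring

lemma logCurvature_finTheta (hp₀ : p ≠ 0) (hp : ‖p‖ < 1) (hx : x ≠ 0)
    (hl : ∀ k : ℕ, x * p ^ k ≠ 1) (hr : ∀ k : ℕ, p / x * p ^ k ≠ 1) (M N : ℕ) :
    logCurvature (finTheta p x M N) = moment (finTheta p x M N) 0 ^ 2 *
      (∑ k ∈ Finset.range M, koebe (x * p ^ k) + ∑ k ∈ Finset.range N, koebe (p / x * p ^ k)) := by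
  induction N with
  | zero =>
    induction M with
    | zero => simp [logCurvature, moment_finTheta_zero_zero]
    | succ M ih =>
      rw [Finset.sum_range_succ, add_right_comm, finTheta_succ_left hp₀ hp hx]
      exact (hasMoments_finTheta hp₀ hp hx M 0).logCurvature_mulOneSub_of_eq (hl M) (one_pow 2) ih
  | succ N ih =>
    rw [Finset.sum_range_succ, ← add_assoc, finTheta_succ_right hp₀ hp hx]
    exact (hasMoments_finTheta hp₀ hp hx M N).logCurvature_mulOneSub_of_eq (hr N) neg_one_sq ih

end FiniteTripleProduct

section ParitySplitting

lemma tsum_int_even_add_odd {M : Type*} [AddCommGroup M] [UniformSpace M] [IsUniformAddGroup M]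
    [CompleteSpace M] [T2Space M] {f : ℤ → M} (hf : Summable f) :
    ∑' b : ℤ, f (2 * b) + ∑' b : ℤ, f (2 * b + 1) = ∑' n : ℤ, f n := by
  have hinj : Function.Injective fun b : ℤ ↦ 2 * b := mul_right_injective₀ two_ne_zero
  have hinj' : Function.Injective fun b : ℤ ↦ 2 * b + 1 := (add_left_injective 1).comp hinj
  have he := hinj.hasSum_range_iff.mpr (hf.comp_injective hinj).hasSum
  have ho := hinj'.hasSum_range_iff.mpr (hf.comp_injective hinj').hasSum
  refine (he.add_isCompl ?_ ho).tsum_eq.symm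
  simpa [Function.comp_def] using Int.isCompl_even_odd

lemma tsum_mul_mul_eq_even_add_odd {𝕜 : Type*} [NormedField 𝕜] [CompleteSpace 𝕜] {w t : ℤ → 𝕜}
    (h : Summable fun z : ℤ × ℤ ↦ w (z.1 - z.2) * (t z.1 * t z.2)) :
    ∑' z : ℤ × ℤ, w (z.1 - z.2) * (t z.1 * t z.2) =
      ∑' b : ℤ, w (2 * b) * ∑' a : ℤ, t (a + b + 1) * t (a - b + 1)
        + ∑' b : ℤ, w (2 * b + 1) * ∑' a : ℤ, t (a + b + 1) * t (a - b) := by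
  let shear : ℤ × ℤ ≃ ℤ × ℤ :=
    ⟨fun z ↦ (z.2 + z.1, z.2), fun z ↦ (z.1 - z.2, z.2), fun z ↦ by simp, fun z ↦ by simp⟩
  have hs : Summable fun z : ℤ × ℤ ↦ w z.1 * (t (z.2 + z.1) * t z.2) := by
    simpa [Function.comp_def, shear] using shear.summable_iff.mpr h
  have hd : Summable fun d : ℤ ↦ w d * ∑' n : ℤ, t (n + d) * t n := by
    simpa only [tsum_mul_left] using hs.prod
  have heven (b : ℤ) : ∑' n : ℤ, t (n + 2 * b) * t n = ∑' a : ℤ, t (a + b + 1) * t (a - b + 1) := by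
    rw [← (Equiv.addRight (1 - b)).tsum_eq]
    refine tsum_congr fun a ↦ ?_
    simp only [Equiv.coe_addRight]
    ring_nf
  have hodd (b : ℤ) :
      ∑' n : ℤ, t (n + (2 * b + 1)) * t n = ∑' a : ℤ, t (a + b + 1) * t (a - b) := by
    rw [← (Equiv.subRight b).tsum_eq]
    refine tsum_congr fun a ↦ ?_
    simp only [Equiv.subRight_apply]
    ring_nf
  calc ∑' z : ℤ × ℤ, w (z.1 - z.2) * (t z.1 * t z.2)
      = ∑' z : ℤ × ℤ, w z.1 * (t (z.2 + z.1) * t z.2) := by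
        rw [← shear.tsum_eq]
        simp [shear]
    _ = ∑' d : ℤ, w d * ∑' n : ℤ, t (n + d) * t n := by
        rw [hs.tsum_prod]
        simp only [tsum_mul_left]
    _ = _ := by
        simp only [← heven, ← hodd]
        exact (tsum_int_even_add_odd hd).symm

end ParitySplitting

section LimitOfFiniteProducts

variable {p x : ℂ}

lemma tendsto_moment_finTheta {ι : Type*} {l : Filter ι} {M N : ι → ℕ} (hp₀ : p ≠ 0)
    (hp : ‖p‖ < 1) (hx : x ≠ 0) (hM : Tendsto M l atTop) (hN : Tendsto N l atTop) (k : ℕ) :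
    Tendsto (fun i ↦ moment (finTheta p x (M i) (N i)) k) l
      (𝓝 ((qPochInf p p)⁻¹ * moment (thetaTerm p x) k)) := by
  obtain ⟨C, hC⟩ := exists_norm_qBinom_le hp
  exact tendsto_moment_mul (hasMoments_thetaTerm hp₀ hp hx) (fun i n ↦ hC (M i + N i) (N i + n))
    (tendsto_qBinom hp hM hN) k

lemma theta_eq_qPochInf_mul (hp₀ : p ≠ 0) (hp : ‖p‖ < 1) (hx : x ≠ 0) :
    theta p x = qPochInf p p * (qPochInf x p * qPochInf (p / x) p) := by
  have h := tendsto_moment_finTheta hp₀ hp hx tendsto_id tendsto_id 0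
  simp only [id_eq, moment_zero_finTheta hp₀ hp hx, moment_zero] at h
  have h' := tendsto_nhds_unique ((tendsto_qPoch x hp).mul (tendsto_qPoch (p / x) hp)) h
  rw [h', theta, mul_inv_cancel_left₀ (qPochInf_self_ne_zero hp)]

lemma theta_one (hp₀ : p ≠ 0) (hp : ‖p‖ < 1) : theta p 1 = 0 := by
  rw [theta_eq_qPochInf_mul hp₀ hp one_ne_zero, qPochInf_one, zero_mul, mul_zero]

lemma moment_one_thetaTerm_one (hp₀ : p ≠ 0) (hp : ‖p‖ < 1) :
    moment (thetaTerm p 1) 1 = -qPochInf p p ^ 3 := by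
  have h := tendsto_moment_finTheta hp₀ hp one_ne_zero (tendsto_add_atTop_nat 1) tendsto_id 1
  simp only [id_eq, moment_one_finTheta_one hp₀ hp] at h
  have h' := tendsto_nhds_unique ((tendsto_qPoch p hp).mul (tendsto_qPoch p hp)).neg h
  rw [← mul_inv_cancel_left₀ (qPochInf_self_ne_zero hp) (moment (thetaTerm p 1) 1), ← h']
  ring

lemma logCurvature_thetaTerm_one (hp₀ : p ≠ 0) (hp : ‖p‖ < 1) :
    logCurvature (thetaTerm p 1) = qPochInf p p ^ 6 := by
  rw [logCurvature, moment_one_thetaTerm_one hp₀ hp, moment_zero, ← theta, theta_one hp₀ hp]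
  ring

lemma koebe_inv (z : ℂ) : koebe z⁻¹ = koebe z := by
  rcases eq_or_ne z 0 with rfl | hz
  · rw [inv_zero]
  · have h : 1 - z⁻¹ = -(1 - z) / z := by
      field_simp
      ring
    rw [koebe, koebe, h, div_pow, neg_sq]
    field_simp

lemma summable_koebe_mul_pow (a : ℂ) (hp : ‖p‖ < 1) : Summable fun k : ℕ ↦ koebe (a * p ^ k) := by
  have hdiff : DifferentiableAt ℂ (koebe : ℂ → ℂ) 0 := by
    unfold koebe
    fun_prop (disch := simp)
  have hO : (koebe : ℂ → ℂ) =O[𝓝 0] fun z ↦ z := by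
    have hzero : koebe (0 : ℂ) = 0 := zero_div _
    simpa only [hzero, sub_zero] using hdiff.isBigO_sub
  have hlim : Tendsto (fun k : ℕ ↦ a * p ^ k) atTop (𝓝 0) := by
    simpa using (tendsto_pow_atTop_nhds_zero_of_norm_lt_one hp).const_mul a
  have hsum : Summable fun k : ℕ ↦ ‖a * p ^ k‖ := by
    simpa only [norm_neg] using summable_norm_mul_pow a hp
  exact summable_of_isBigO_nat hsum (hO.comp_tendsto hlim).norm_right

lemma div_mul_pow_eq_inv (p x : ℂ) (k : ℕ) : p / x * p ^ k = (x * p ^ (-((k : ℤ) + 1)))⁻¹ := by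
  rw [mul_inv, ← zpow_neg, neg_neg, ← Nat.cast_add_one, zpow_natCast, pow_succ']
  ring

lemma koebe_mul_zpow_neg (p x : ℂ) (k : ℕ) :
    koebe (x * p ^ (-((k : ℤ) + 1))) = koebe (p / x * p ^ k) := by
  rw [div_mul_pow_eq_inv, koebe_inv]

lemma summable_koebe_mul_zpow (x : ℂ) (hp : ‖p‖ < 1) :
    Summable fun n : ℤ ↦ koebe (x * p ^ n) :=
  .of_nat_of_neg_add_one (by simpa only [zpow_natCast] using summable_koebe_mul_pow x hp)
    (by simpa only [koebe_mul_zpow_neg] using summable_koebe_mul_pow (p / x) hp)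

lemma tsum_koebe_mul_zpow (x : ℂ) (hp : ‖p‖ < 1) :
    ∑' n : ℤ, koebe (x * p ^ n) =
      ∑' k : ℕ, koebe (x * p ^ k) + ∑' k : ℕ, koebe (p / x * p ^ k) := by
  rw [tsum_of_nat_of_neg_add_one
    (by simpa only [zpow_natCast] using summable_koebe_mul_pow x hp)
    (by simpa only [koebe_mul_zpow_neg] using summable_koebe_mul_pow (p / x) hp)]
  simp only [zpow_natCast, koebe_mul_zpow_neg]

lemma logCurvature_thetaTerm (hp₀ : p ≠ 0) (hp : ‖p‖ < 1) (hx : x ≠ 0)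
    (hxp : ∀ n : ℤ, x * p ^ n ≠ 1) :
    logCurvature (thetaTerm p x) = theta p x ^ 2 * ∑' n : ℤ, koebe (x * p ^ n) := by
  have hl (k : ℕ) : x * p ^ k ≠ 1 := mod_cast hxp k
  have hr (k : ℕ) : p / x * p ^ k ≠ 1 := by
    rw [div_mul_pow_eq_inv, ne_eq, inv_eq_one]
    exact hxp _
  have hlim := tendsto_moment_finTheta hp₀ hp hx tendsto_id tendsto_id
  have hsum := (summable_koebe_mul_pow x hp).hasSum.tendsto_sum_nat.add
    (summable_koebe_mul_pow (p / x) hp).hasSum.tendsto_sum_nat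
  have h := tendsto_nhds_unique (((hlim 0).pow 2).mul hsum)
    ((((hlim 1).pow 2).sub ((hlim 0).mul (hlim 2))).congr
      fun N ↦ logCurvature_finTheta hp₀ hp hx hl hr N N)
  rw [moment_zero, ← theta, ← tsum_koebe_mul_zpow x hp] at h
  have hne : (qPochInf p p)⁻¹ ^ 2 ≠ 0 := pow_ne_zero 2 (inv_ne_zero (qPochInf_self_ne_zero hp))
  rw [logCurvature, moment_zero, ← theta]
  refine mul_left_cancel₀ hne ?_
  linear_combination -h

end LimitOfFiniteProducts

section ThetaProducts

/-- `∑ p^(a²) x^(2a)`, the even-index part of `∑ p^(k²/4) x^k`. -/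
noncomputable def thetaEven (p x : ℂ) : ℂ := ∑' a : ℤ, p ^ (a ^ 2) * x ^ (2 * a)

/-- `∑ p^(a(a+1)) x^(2a+1)`, the odd-index part of `∑ p^(k²/4) x^k` without the factor
`p^(1/4)`. -/
noncomputable def thetaOdd (p x : ℂ) : ℂ := ∑' a : ℤ, p ^ (a * (a + 1)) * x ^ (2 * a + 1)

variable {p x : ℂ}

lemma thetaTerm_mul_thetaTerm_even (hp₀ : p ≠ 0) (hx : x ≠ 0) (a b : ℤ) :
    thetaTerm p x (a + b + 1) * thetaTerm p x (a - b + 1) =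
      x * p ^ (b ^ 2) * (p ^ (a * (a + 1)) * x ^ (2 * a + 1)) := by
  have hexp : (a + b + 1) * (a + b + 1 - 1) / 2 + (a - b + 1) * (a - b + 1 - 1) / 2 =
      b ^ 2 + a * (a + 1) := by
    linarith [two_mul_triangular (a + b + 1), two_mul_triangular (a - b + 1)]
  have hx' : (-x) ^ (a + b + 1) * (-x) ^ (a - b + 1) = x * x ^ (2 * a + 1) := by
    rw [← zpow_add₀ (neg_ne_zero.mpr hx), ← zpow_one_add₀ hx,
      show a + b + 1 + (a - b + 1) = 2 * (a + 1) by ring, Even.neg_zpow (even_two_mul _)]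
    ring_nf
  rw [thetaTerm, thetaTerm, mul_mul_mul_comm, hx', ← zpow_add₀ hp₀, hexp, zpow_add₀ hp₀]
  ring

lemma thetaTerm_mul_thetaTerm_odd (hp₀ : p ≠ 0) (hx : x ≠ 0) (a b : ℤ) :
    thetaTerm p x (a + b + 1) * thetaTerm p x (a - b) =
      -x * p ^ (b * (b + 1)) * (p ^ (a ^ 2) * x ^ (2 * a)) := by
  have hexp : (a + b + 1) * (a + b + 1 - 1) / 2 + (a - b) * (a - b - 1) / 2 =
      b * (b + 1) + a ^ 2 := by
    linarith [two_mul_triangular (a + b + 1), two_mul_triangular (a - b)]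
  have hx' : (-x) ^ (a + b + 1) * (-x) ^ (a - b) = -x * x ^ (2 * a) := by
    rw [← zpow_add₀ (neg_ne_zero.mpr hx), show a + b + 1 + (a - b) = 2 * a + 1 by ring,
      zpow_add_one₀ (neg_ne_zero.mpr hx), Even.neg_zpow (even_two_mul _), mul_comm]
  rw [thetaTerm, thetaTerm, mul_mul_mul_comm, hx', ← zpow_add₀ hp₀, hexp, zpow_add₀ hp₀]
  ring

lemma tsum_mul_thetaTerm_mul_thetaTerm (hp₀ : p ≠ 0) (hx : x ≠ 0) {w : ℤ → ℂ}
    (h : Summable fun z : ℤ × ℤ ↦ w (z.1 - z.2) * (thetaTerm p x z.1 * thetaTerm p x z.2)) :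
    ∑' z : ℤ × ℤ, w (z.1 - z.2) * (thetaTerm p x z.1 * thetaTerm p x z.2) =
      x * ((∑' b : ℤ, p ^ (b ^ 2) * w (2 * b)) * thetaOdd p x
        - (∑' b : ℤ, p ^ (b * (b + 1)) * w (2 * b + 1)) * thetaEven p x) := by
  rw [tsum_mul_mul_eq_even_add_odd h]
  simp only [thetaTerm_mul_thetaTerm_even hp₀ hx, thetaTerm_mul_thetaTerm_odd hp₀ hx,
    tsum_mul_left]
  rw [← thetaOdd, ← thetaEven]
  have heven : ∑' b : ℤ, w (2 * b) * (x * p ^ (b ^ 2) * thetaOdd p x) =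
      x * thetaOdd p x * ∑' b : ℤ, p ^ (b ^ 2) * w (2 * b) := by
    rw [← tsum_mul_left]
    exact tsum_congr fun b ↦ by ring
  have hodd : ∑' b : ℤ, w (2 * b + 1) * (-x * p ^ (b * (b + 1)) * thetaEven p x) =
      -(x * thetaEven p x) * ∑' b : ℤ, p ^ (b * (b + 1)) * w (2 * b + 1) := by
    rw [← tsum_mul_left]
    exact tsum_congr fun b ↦ by ring
  rw [heven, hodd]
  ring

lemma theta_mul_mul_theta_div {y : ℂ} (hp₀ : p ≠ 0) (hp : ‖p‖ < 1) (hx : x ≠ 0) (hy : y ≠ 0) :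
    theta p (x * y) * theta p (x / y) =
      x * (thetaOdd p x * thetaEven p y - thetaEven p x * thetaOdd p y) := by
  have hnorm {z : ℂ} (hz : z ≠ 0) : Summable fun n ↦ ‖thetaTerm p z n‖ := by
    simpa only [pow_zero, one_mul] using hasMoments_thetaTerm hp₀ hp hz 0
  have hterm (z : ℤ × ℤ) : thetaTerm p (x * y) z.1 * thetaTerm p (x / y) z.2 =
      y ^ (z.1 - z.2) * (thetaTerm p x z.1 * thetaTerm p x z.2) := by
    rw [div_eq_mul_inv, thetaTerm_mul, thetaTerm_mul, zpow_sub₀ hy, inv_zpow]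
    ring
  have hs := summable_mul_of_summable_norm (hnorm (mul_ne_zero hx hy)) (hnorm (div_ne_zero hx hy))
  rw [theta, theta, tsum_mul_tsum_of_summable_norm (hnorm (mul_ne_zero hx hy))
    (hnorm (div_ne_zero hx hy))]
  simp only [hterm] at hs ⊢
  rw [tsum_mul_thetaTerm_mul_thetaTerm (w := (y ^ ·)) hp₀ hx hs, ← thetaEven, ← thetaOdd]
  ring

lemma exists_logCurvature_thetaTerm_eq (hp₀ : p ≠ 0) (hp : ‖p‖ < 1) :
    ∃ α β : ℂ, ∀ x ≠ 0,
      -2 * logCurvature (thetaTerm p x) = x * (α * thetaOdd p x - β * thetaEven p x) :=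
  ⟨_, _, fun _ hx ↦ by
    have h := (hasMoments_thetaTerm hp₀ hp hx).hasSum_sub_sq_mul
    rw [← h.tsum_eq]
    exact tsum_mul_thetaTerm_mul_thetaTerm (w := fun d ↦ (d : ℂ) ^ 2) hp₀ hx h.summable⟩

end ThetaProducts

theorem stmt16_general {p x y : ℂ} (hp₀ : p ≠ 0) (hp : ‖p‖ < 1) (hx : x ≠ 0) (hy : y ≠ 0)
    (hxp : ∀ n : ℤ, x * p ^ n ≠ 1) (hyp : ∀ n : ℤ, y * p ^ n ≠ 1) :
    (∑' n : ℤ, (x * p ^ n / (1 - x * p ^ n) ^ 2 - y * p ^ n / (1 - y * p ^ n) ^ 2))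
        * ramTheta (-x) (-(p / x)) ^ 2 * ramTheta (-y) (-(p / y)) ^ 2
      = x * ramTheta (-(x * y)) (-(p / (x * y))) * ramTheta (-(y / x)) (-(x * p / y))
          * qPochInf p p ^ 6 := by
  have hsum : ∑' n : ℤ, (x * p ^ n / (1 - x * p ^ n) ^ 2 - y * p ^ n / (1 - y * p ^ n) ^ 2) =
      ∑' n : ℤ, koebe (x * p ^ n) - ∑' n : ℤ, koebe (y * p ^ n) :=
    (summable_koebe_mul_zpow x hp).tsum_sub (summable_koebe_mul_zpow y hp)
  obtain ⟨α, β, hαβ⟩ := exists_logCurvature_thetaTerm_eq hp₀ hp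
  have hone := hαβ 1 one_ne_zero
  have hαx := hαβ x hx
  have hαy := hαβ y hy
  have hθx := theta_mul_mul_theta_div hp₀ hp hx one_ne_zero
  have hθy := theta_mul_mul_theta_div hp₀ hp hy one_ne_zero
  have hθxy := theta_mul_mul_theta_div hp₀ hp hy hx
  rw [logCurvature_thetaTerm_one hp₀ hp] at hone
  rw [logCurvature_thetaTerm hp₀ hp hx hxp] at hαx
  rw [logCurvature_thetaTerm hp₀ hp hy hyp] at hαy
  rw [mul_one, div_one] at hθx hθy
  rw [mul_comm y x] at hθxy
  rw [hsum, mul_comm x p, ← div_div_eq_mul_div, ramTheta_neg_neg_div hp₀ hx,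
    ramTheta_neg_neg_div hp₀ hy, ramTheta_neg_neg_div hp₀ (mul_ne_zero hx hy),
    ramTheta_neg_neg_div hp₀ (div_ne_zero hy hx)]
  linear_combination (-1 / 2) * (theta p y ^ 2 * hαx - theta p x ^ 2 * hαy
    + x * (α * thetaOdd p x - β * thetaEven p x) * hθy
    - y * (α * thetaOdd p y - β * thetaEven p y) * hθx
    - x * theta p (x * y) * theta p (y / x) * hone
    - x * (α * thetaOdd p 1 - β * thetaEven p 1) * hθxy)

theorem stmt16 (q : ℝ) (hq0 : 0 < q) (hq1 : q < 1) (x y : ℂ) (hx : x ≠ 0) (hy : y ≠ 0)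
    (hxn : ∀ n : ℤ, x * (q : ℂ) ^ (10 * n) ≠ 1) (hyn : ∀ n : ℤ, y * (q : ℂ) ^ (10 * n) ≠ 1) :
    (∑' n : ℤ, (x * (q : ℂ) ^ (10 * n) / (1 - x * (q : ℂ) ^ (10 * n)) ^ 2
          - y * (q : ℂ) ^ (10 * n) / (1 - y * (q : ℂ) ^ (10 * n)) ^ 2))
        * ramTheta (-x) (-((q : ℂ) ^ 10 / x)) ^ 2 * ramTheta (-y) (-((q : ℂ) ^ 10 / y)) ^ 2
      = x * ramTheta (-(x * y)) (-((q : ℂ) ^ 10 / (x * y)))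
          * ramTheta (-(y / x)) (-(x * (q : ℂ) ^ 10 / y))
          * (qPochInf ((q : ℂ) ^ 10) ((q : ℂ) ^ 10)) ^ 6 := by
  have hpow (n : ℤ) : (q : ℂ) ^ (10 * n) = ((q : ℂ) ^ 10) ^ n := mod_cast zpow_mul (q : ℂ) 10 n
  simp only [hpow] at hxn hyn ⊢
  have hq : ‖(q : ℂ) ^ 10‖ < 1 := by
    rw [norm_pow, Complex.norm_of_nonneg hq0.le]
    exact pow_lt_one₀ hq0.le hq1 (by norm_num)
  exact stmt16_general (pow_ne_zero 10 (mod_cast hq0.ne')) hq hx hy hxn hyn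
end

section
/- Let q be a real number with 0 < q < 1. Then ∑_{n∈ℤ} [q^{10n+5}/(1 − q^{10n+5})² + q^{10n}/(1 + q^{10n})²] = φ(q⁵)⁴/4. -/
/-!
Put `s n = 2 / (q ^ n + q ^ (-n))` and `S(q) = ∑ s n`. Convolving `s` with the coefficients of
`φ(-q)` gives a sequence `c` satisfying `c (m + 1) = q ^ (2 m + 1) c m`, because in the difference
of the two sides the denominators cancel and an alternating theta series summing to zero remains.
Thus `c m = q ^ (m²) c 0`, so `S(q) φ(-q) = c 0 φ(q)`. As `c 0` is even in `q`, this yields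
`S(q) φ(-q)² = S(-q) φ(q)²`; combined with `φ(q)² + φ(-q)² = 2 φ(q²)²` and `S(q) + S(-q) = 2 S(q²)`
it shows that `S / φ²` is invariant under `q ↦ q²`. The ratio tends to `1` at the origin, which
proves the two-square identity `S = φ²`.

For the fourth power, expand `S²` as `∑ₖ ∑ₙ s n * s (k - n)`. For `k ≠ 0` the summand is a multiple
of a difference of hyperbolic tangents, so the inner sum telescopes to `4 k / (q ^ (-k) - q ^ k)`,
and summing over `k` gives a Lambert series which rearranges into
`4 ∑ q ^ (2 n + 1) / (1 - q ^ (2 n + 1))²`. The inner sum at `k = 0` is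
`∑ (s n)² = 4 ∑ q ^ (2 n) / (1 + q ^ (2 n))²`. Finally replace `q` by `q⁵`.
-/

open Filter Topology

lemma hasSum_convolution {G R : Type*} [AddCommGroup G] [NormedRing R] [CompleteSpace R]
    {f g : G → R} (hf : Summable fun n ↦ ‖f n‖) (hg : Summable fun n ↦ ‖g n‖) :
    HasSum (fun k ↦ ∑' n, f n * g (k - n)) ((∑' n, f n) * ∑' n, g n) := by
  let shear : G × G ≃ G × G :=
    { toFun := fun p ↦ (p.2, p.1 - p.2)
      invFun := fun p ↦ (p.1 + p.2, p.1)
      left_inv := fun p ↦ by simp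
      right_inv := fun p ↦ by simp }
  have hprod : HasSum (fun p : G × G ↦ f p.1 * g p.2) ((∑' n, f n) * ∑' n, g n) := by
    rw [tsum_mul_tsum_of_summable_norm hf hg]
    exact (summable_mul_of_summable_norm hf hg).hasSum
  have hshear := shear.hasSum_iff.mpr hprod
  exact hshear.prod_fiberwise fun k ↦ (hshear.summable.prod_factor k).hasSum

lemma hasSum_comp_two_mul {𝕜 : Type*} [DivisionRing 𝕜] [TopologicalSpace 𝕜] [ContinuousAdd 𝕜]
    {f : ℤ → 𝕜} {a b : 𝕜} (ha : HasSum f a) (hb : HasSum (fun n ↦ (-1) ^ n * f n) b) :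
    HasSum (fun n ↦ 2 * f (2 * n)) (a + b) := by
  have hinj : Function.Injective fun n : ℤ ↦ 2 * n := mul_right_injective₀ two_ne_zero
  have hodd : ∀ n ∉ Set.range fun n : ℤ ↦ 2 * n, f n + (-1) ^ n * f n = 0 := by
    intro n hn
    have : Odd n := by
      rw [← Int.not_even_iff_odd, even_iff_exists_two_mul]
      exact fun ⟨m, hm⟩ ↦ hn ⟨m, hm.symm⟩
    simp [this.neg_one_zpow]
  refine ((hinj.hasSum_iff hodd).mpr (ha.add hb)).congr_fun fun n ↦ ?_
  simp [(even_two_mul n).neg_one_zpow, two_mul (f _)]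

lemma hasSum_sub_add_one {E : Type*} [AddCommGroup E] [TopologicalSpace E]
    [IsTopologicalAddGroup E] [T2Space E] {t : ℤ → E} {a b : E}
    (ht : Summable fun n ↦ t n - t (n + 1)) (ha : Tendsto t atTop (𝓝 a))
    (hb : Tendsto t atBot (𝓝 b)) : HasSum (fun n ↦ t n - t (n + 1)) (b - a) := by
  have hlim : HasSum (fun n ↦ t n - t (n + 1)) (b - a) (SummationFilter.symmetricIco ℤ) := by
    simp only [SummationFilter.hasSum_symmetricIco_int_iff, Finset.sum_Ico_int_sub]
    exact (hb.comp (tendsto_neg_atTop_atBot.comp tendsto_natCast_atTop_atTop)).sub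
      (ha.comp tendsto_natCast_atTop_atTop)
  have hsymm : HasSum (fun n ↦ t n - t (n + 1)) (∑' n, (t n - t (n + 1)))
      (SummationFilter.symmetricIco ℤ) :=
    ht.hasSum.mono_left SummationFilter.LeAtTop.le_atTop
  rw [← hsymm.unique hlim]
  exact ht.hasSum

lemma hasSum_sub_shift {E : Type*} [AddCommGroup E] [TopologicalSpace E]
    [IsTopologicalAddGroup E] [T2Space E] {t : ℤ → E} {a b : E}
    (ht : Summable fun n ↦ t n - t (n + 1)) (ha : Tendsto t atTop (𝓝 a))
    (hb : Tendsto t atBot (𝓝 b)) (k : ℤ) :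
    HasSum (fun n ↦ t n - t (n - k)) (k • (a - b)) := by
  have hstep (j : ℤ) : HasSum (fun n ↦ t (n - j) - t (n - (j + 1))) (a - b) := by
    have := ((Equiv.subRight (j + 1)).hasSum_iff.mpr (hasSum_sub_add_one ht ha hb)).neg
    rw [neg_sub] at this
    refine this.congr_fun fun n ↦ ?_
    simp [sub_add_eq_sub_sub]
  induction k using Int.induction_on with
  | zero => simp
  | succ i ih =>
    rw [add_smul, one_smul]
    exact (ih.add (hstep i)).congr_fun fun n ↦ (sub_add_sub_cancel _ _ _).symm
  | pred i ih =>
    rw [sub_smul, one_smul]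
    refine (ih.sub (hstep (-i - 1))).congr_fun fun n ↦ ?_
    simp

lemma norm_pow_lt_one {R : Type*} [SeminormedRing R] [NormOneClass R] [NormMulClass R] {x : R}
    (hx : ‖x‖ < 1) {n : ℕ} (hn : n ≠ 0) : ‖x ^ n‖ < 1 := by
  rw [norm_pow]
  exact pow_lt_one₀ (norm_nonneg x) hx hn

lemma summable_pow_natAbs {r : ℝ} (hr0 : 0 ≤ r) (hr1 : r < 1) :
    Summable fun n : ℤ ↦ r ^ n.natAbs :=
  have h : Summable fun n : ℕ ↦ r ^ n := summable_geometric_of_lt_one hr0 hr1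
  .of_nat_of_neg (by simpa using h) (by simpa using h)

lemma tendsto_tsum_of_norm_le_mul_pow_natAbs {E F : Type*} [NormedAddCommGroup E]
    [NormedAddCommGroup F] [CompleteSpace F] {f : E → ℤ → F} {c : F} {C : ℝ}
    (hf0 : ∀ x, f x 0 = c) (hf : ∀ᶠ x in 𝓝[≠] 0, ∀ n, ‖f x n‖ ≤ C * ‖x‖ ^ n.natAbs) :
    Tendsto (fun x ↦ ∑' n, f x n) (𝓝[≠] 0) (𝓝 c) := by
  have hnorm : Tendsto (fun x : E ↦ ‖x‖) (𝓝[≠] 0) (𝓝 0) :=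
    tendsto_norm_zero.mono_left nhdsWithin_le_nhds
  have hlim (n : ℤ) : Tendsto (f · n) (𝓝[≠] 0) (𝓝 (if n = 0 then c else 0)) := by
    split_ifs with hn
    · simpa only [hn, hf0] using tendsto_const_nhds
    · refine squeeze_zero_norm' (hf.mono fun x hx ↦ hx n) ?_
      simpa [hn] using (hnorm.pow n.natAbs).const_mul C
  have hbound : ∀ᶠ x in 𝓝[≠] (0 : E), ∀ n, ‖f x n‖ ≤ C * (1 / 2) ^ n.natAbs := by
    filter_upwards [hf, hnorm.eventually_le_const (u := 1 / 2) (by norm_num)] with x hx hx2 n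
    have hC : 0 ≤ C := by simpa using (norm_nonneg _).trans (hx 0)
    exact (hx n).trans (by gcongr)
  simpa using tendsto_tsum_of_dominated_convergence
    ((summable_pow_natAbs (by norm_num) (by norm_num)).mul_left C) hlim hbound

lemma phi_eq_tsum (q : ℂ) : phi q = ∑' n : ℤ, q ^ (n ^ 2) := by
  refine tsum_congr fun n ↦ ?_
  have hsucc : 0 ≤ n * (n + 1) / 2 :=
    Int.ediv_nonneg (by nlinarith [sq_nonneg (2 * n + 1)]) two_pos.le
  have hpred : 0 ≤ n * (n - 1) / 2 :=
    Int.ediv_nonneg (by nlinarith [sq_nonneg (2 * n - 1)]) two_pos.le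
  rw [← pow_add, ← zpow_natCast]
  congr 1
  push_cast
  rw [Int.toNat_of_nonneg hsucc, Int.toNat_of_nonneg hpred,
    ← Int.add_ediv_of_dvd_left (Int.even_mul_succ_self n).two_dvd,
    show n * (n + 1) + n * (n - 1) = 2 * n ^ 2 by ring]
  simp

lemma norm_zpow_sq_le {q : ℂ} (hq1 : ‖q‖ < 1) (n : ℤ) : ‖q ^ (n ^ 2)‖ ≤ ‖q‖ ^ n.natAbs := by
  rw [← Int.natAbs_sq, ← Nat.cast_pow, zpow_natCast, norm_pow]
  exact pow_le_pow_of_le_one (norm_nonneg q) hq1.le (Nat.le_self_pow two_ne_zero _)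

lemma summable_norm_zpow_sq {q : ℂ} (hq1 : ‖q‖ < 1) : Summable fun n : ℤ ↦ ‖q ^ (n ^ 2)‖ :=
  .of_nonneg_of_le (fun _ ↦ norm_nonneg _) (norm_zpow_sq_le hq1)
    (summable_pow_natAbs (norm_nonneg q) hq1)

lemma hasSum_phi {q : ℂ} (hq1 : ‖q‖ < 1) : HasSum (fun n : ℤ ↦ q ^ (n ^ 2)) (phi q) :=
  phi_eq_tsum q ▸ (summable_norm_zpow_sq hq1).of_norm.hasSum

lemma eventually_norm_lt_nhdsNE_zero {E : Type*} [SeminormedAddCommGroup E] {r : ℝ} (hr : 0 < r) :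
    ∀ᶠ x : E in 𝓝[≠] 0, ‖x‖ < r :=
  (tendsto_norm_zero.mono_left nhdsWithin_le_nhds).eventually_lt_const hr

lemma tendsto_phi_nhdsNE_zero : Tendsto phi (𝓝[≠] 0) (𝓝 1) := by
  simp only [funext phi_eq_tsum]
  refine tendsto_tsum_of_norm_le_mul_pow_natAbs (C := 1) (by simp) ?_
  filter_upwards [eventually_norm_lt_nhdsNE_zero one_pos] with q hq n
  simpa using norm_zpow_sq_le hq n

lemma neg_one_zpow_sq {K : Type*} [DivisionRing K] (n : ℤ) : (-1 : K) ^ (n ^ 2) = (-1) ^ n := by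
  simp [neg_one_zpow_eq_ite, Int.even_pow]

lemma neg_one_zpow_neg {K : Type*} [DivisionRing K] (n : ℤ) : (-1 : K) ^ (-n) = (-1) ^ n := by
  simp only [neg_one_zpow_eq_ite, even_neg]

lemma neg_one_zpow_sub {K : Type*} [DivisionRing K] (m n : ℤ) :
    (-1 : K) ^ (m - n) = (-1) ^ m * (-1) ^ n := by
  rw [sub_eq_add_neg, zpow_add₀ (by simp), neg_one_zpow_neg]

lemma neg_zpow_eq_mul {K : Type*} [Field K] (q : K) (n : ℤ) : (-q) ^ n = (-1) ^ n * q ^ n := by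
  rw [← mul_zpow, neg_one_mul]

lemma neg_zpow_sq_mul_neg_zpow_sub_sq {K : Type*} [Field K] (x y : K) (k n : ℤ) :
    (-x) ^ (n ^ 2) * (-y) ^ ((k - n) ^ 2) = (-1) ^ k * (x ^ (n ^ 2) * y ^ ((k - n) ^ 2)) := by
  have hsign : (-1 : K) ^ (n ^ 2) * (-1) ^ ((k - n) ^ 2) = (-1) ^ k := by
    rw [neg_one_zpow_sq, neg_one_zpow_sq, ← zpow_add₀ (by simp), add_sub_cancel]
  rw [neg_zpow_eq_mul x, neg_zpow_eq_mul y, ← hsign]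
  ring

lemma zpow_add_sq_mul_zpow_sub_sq {K : Type*} [Field K] {x y : K} (hx0 : x ≠ 0) (hy0 : y ≠ 0)
    (hxy : x ^ 2 = y ^ 2) (j l : ℤ) :
    x ^ ((j + l) ^ 2) * y ^ ((j - l) ^ 2) = (x * y) ^ (j ^ 2) * (x * y) ^ (l ^ 2) := by
  have hcross : x ^ (2 * (j * l)) * y ^ (-(2 * (j * l))) = 1 := by
    rw [zpow_neg, zpow_mul x, zpow_mul y, zpow_ofNat, zpow_ofNat, hxy]
    exact mul_inv_cancel₀ (zpow_ne_zero _ (pow_ne_zero 2 hy0))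
  rw [show (j + l) ^ 2 = j ^ 2 + l ^ 2 + 2 * (j * l) by ring,
    show (j - l) ^ 2 = j ^ 2 + l ^ 2 + -(2 * (j * l)) by ring]
  simp only [zpow_add₀ hx0, zpow_add₀ hy0, mul_zpow]
  linear_combination x ^ j ^ 2 * x ^ l ^ 2 * y ^ j ^ 2 * y ^ l ^ 2 * hcross

lemma hasSum_phi_mul_phi {x y : ℂ} (hx1 : ‖x‖ < 1) (hy1 : ‖y‖ < 1) :
    HasSum (fun k : ℤ ↦ ∑' n : ℤ, x ^ (n ^ 2) * y ^ ((k - n) ^ 2)) (phi x * phi y) := by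
  simpa only [phi_eq_tsum] using
    hasSum_convolution (summable_norm_zpow_sq hx1) (summable_norm_zpow_sq hy1)

lemma phi_mul_phi_add_phi_neg_mul_phi_neg {x y : ℂ} (hx0 : x ≠ 0) (hx1 : ‖x‖ < 1)
    (hxy : x ^ 2 = y ^ 2) :
    phi x * phi y + phi (-x) * phi (-y) = 2 * phi (x * y) ^ 2 := by
  have hnorm : ‖y‖ = ‖x‖ := by
    rcases sq_eq_sq_iff_eq_or_eq_neg.mp hxy with rfl | rfl <;> simp
  have hy0 : y ≠ 0 := norm_ne_zero_iff.mp (by simpa [hnorm])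
  have hy1 : ‖y‖ < 1 := hnorm ▸ hx1
  have hmul1 : ‖x * y‖ < 1 := by
    simpa using mul_lt_one_of_nonneg_of_lt_one_left (norm_nonneg x) hx1 hy1.le
  have hneg := hasSum_phi_mul_phi (x := -x) (y := -y) (by rwa [norm_neg]) (by rwa [norm_neg])
  simp only [neg_zpow_sq_mul_neg_zpow_sub_sq, tsum_mul_left] at hneg
  have heven := hasSum_comp_two_mul (hasSum_phi_mul_phi hx1 hy1) hneg
  have hinner (j : ℤ) : ∑' n : ℤ, x ^ (n ^ 2) * y ^ ((2 * j - n) ^ 2) =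
      (x * y) ^ (j ^ 2) * phi (x * y) := by
    rw [phi_eq_tsum, ← tsum_mul_left, ← (Equiv.addLeft j).tsum_eq]
    refine tsum_congr fun l ↦ ?_
    rw [Equiv.coe_addLeft, show 2 * j - (j + l) = j - l by ring]
    exact zpow_add_sq_mul_zpow_sub_sq hx0 hy0 hxy j l
  simp only [hinner] at heven
  rw [heven.unique (((hasSum_phi hmul1).mul_right (phi (x * y))).mul_left 2)]
  ring

lemma tendsto_pow_two_pow_nhdsNE_zero {q : ℂ} (hq0 : q ≠ 0) (hq1 : ‖q‖ < 1) :
    Tendsto (fun k : ℕ ↦ q ^ 2 ^ k) atTop (𝓝[≠] 0) :=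
  tendsto_nhdsWithin_iff.mpr
    ⟨(tendsto_pow_atTop_nhds_zero_of_norm_lt_one hq1).comp
      (tendsto_pow_atTop_atTop_of_one_lt one_lt_two),
    .of_forall fun _ ↦ pow_ne_zero _ hq0⟩

-- A zero of `φ(x)φ(-x) = φ(-x²)²` at `x` is one at `x²`, `x⁴`, …, although `φ → 1` at the origin.
lemma phi_ne_zero {q : ℂ} (hq0 : q ≠ 0) (hq1 : ‖q‖ < 1) : phi q ≠ 0 := by
  have hstep {x : ℂ} (hx0 : x ≠ 0) (hx1 : ‖x‖ < 1) (h : phi x * phi (-x) = 0) :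
      phi (x ^ 2) * phi (-x ^ 2) = 0 := by
    have := phi_mul_phi_add_phi_neg_mul_phi_neg hx0 hx1 (neg_sq x).symm
    rw [mul_neg, ← sq, neg_neg, mul_comm (phi (-x)), h] at this
    simp_all
  intro h
  have hzero (k : ℕ) : phi (q ^ 2 ^ k) * phi (-q ^ 2 ^ k) = 0 := by
    induction k with
    | zero => simp [h]
    | succ k ih =>
      rw [pow_succ, pow_mul]
      exact hstep (pow_ne_zero _ hq0) (norm_pow_lt_one hq1 (by positivity)) ih
  have hneg : Tendsto (fun x : ℂ ↦ -x) (𝓝[≠] 0) (𝓝[≠] 0) :=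
    (neg_nhdsNE.trans (by rw [neg_zero])).le
  have hlim := (tendsto_phi_nhdsNE_zero.mul (tendsto_phi_nhdsNE_zero.comp hneg)).comp
    (tendsto_pow_two_pow_nhdsNE_zero hq0 hq1)
  simp only [Function.comp_def, hzero] at hlim
  simpa using tendsto_nhds_unique hlim tendsto_const_nhds

/-- With `q = exp (-t)` this is the hyperbolic secant of `n * t`. -/
noncomputable def qSech (q : ℂ) (n : ℤ) : ℂ := 2 / (q ^ n + q ^ (-n))

lemma eq_zero_of_norm_zpow_eq_norm_zpow_neg {q : ℂ} (hq0 : q ≠ 0) (hq1 : ‖q‖ < 1) {n : ℤ}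
    (h : ‖q ^ n‖ = ‖q ^ (-n)‖) : n = 0 := by
  rw [norm_zpow, norm_zpow] at h
  have := zpow_right_injective₀ (norm_pos_iff.mpr hq0) hq1.ne h
  omega

lemma zpow_add_zpow_neg_ne_zero {q : ℂ} (hq0 : q ≠ 0) (hq1 : ‖q‖ < 1) (n : ℤ) :
    q ^ n + q ^ (-n) ≠ 0 := by
  intro h
  have hn : n = 0 := eq_zero_of_norm_zpow_eq_norm_zpow_neg hq0 hq1
    (by rw [eq_neg_of_add_eq_zero_left h, norm_neg])
  norm_num [hn] at h

lemma zpow_neg_sub_zpow_ne_zero {q : ℂ} (hq0 : q ≠ 0) (hq1 : ‖q‖ < 1) {n : ℤ} (hn : n ≠ 0) :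
    q ^ (-n) - q ^ n ≠ 0 := fun h ↦
  hn (eq_zero_of_norm_zpow_eq_norm_zpow_neg hq0 hq1 (by rw [sub_eq_zero.mp h]))

@[simp] lemma qSech_zero (q : ℂ) : qSech q 0 = 1 := by
  norm_num [qSech]

@[simp] lemma qSech_neg (q : ℂ) (n : ℤ) : qSech q (-n) = qSech q n := by
  simp only [qSech, neg_neg, add_comm]

lemma qSech_neg_left (q : ℂ) (n : ℤ) : qSech (-q) n = (-1) ^ n * qSech q n := by
  rw [qSech, qSech, neg_zpow_eq_mul q, neg_zpow_eq_mul q, neg_one_zpow_neg, ← mul_add]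
  rcases n.even_or_odd with h | h <;> simp only [h.neg_one_zpow, one_mul, neg_one_mul, div_neg]

lemma qSech_two_mul (q : ℂ) (n : ℤ) : qSech q (2 * n) = qSech (q ^ 2) n := by
  simp only [qSech, ← zpow_natCast q 2, ← zpow_mul, Nat.cast_ofNat, mul_neg]

lemma qSech_eq_div {q : ℂ} (hq0 : q ≠ 0) (n : ℤ) :
    qSech q n = 2 * q ^ n / (1 + q ^ (2 * n)) := by
  have hn : q ^ n ≠ 0 := zpow_ne_zero n hq0
  rw [qSech, ← mul_div_mul_right 2 (q ^ n + q ^ (-n)) hn, add_mul, ← zpow_add₀ hq0,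
    ← zpow_add₀ hq0, neg_add_cancel, zpow_zero, ← two_mul, add_comm]

lemma norm_qSech_le {q : ℂ} (hq0 : q ≠ 0) (hq1 : ‖q‖ < 1) (n : ℤ) :
    ‖qSech q n‖ ≤ 2 / (1 - ‖q‖ ^ 2) * ‖q‖ ^ n.natAbs := by
  have hsq : ‖q‖ ^ 2 < 1 := pow_lt_one₀ (norm_nonneg q) hq1 two_ne_zero
  suffices h : ∀ k : ℕ, ‖qSech q k‖ ≤ 2 / (1 - ‖q‖ ^ 2) * ‖q‖ ^ k by
    obtain ⟨k, rfl | rfl⟩ := n.eq_nat_or_neg <;> simpa using h k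
  intro k
  have hden : 1 - ‖q‖ ^ 2 ≤ ‖1 + q ^ (2 * k)‖ := by
    rcases k.eq_zero_or_pos with rfl | hk
    · norm_num
      nlinarith [sq_nonneg ‖q‖]
    · have htri : ‖(1 : ℂ)‖ - ‖q ^ (2 * k)‖ ≤ ‖1 + q ^ (2 * k)‖ := norm_sub_le_norm_add _ _
      have hpow : ‖q‖ ^ (2 * k) ≤ ‖q‖ ^ 2 :=
        pow_le_pow_of_le_one (norm_nonneg q) hq1.le (by omega)
      rw [norm_one, norm_pow] at htri
      linarith
  have hk : qSech q k = 2 * q ^ k / (1 + q ^ (2 * k)) := by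
    rw [qSech_eq_div hq0]
    norm_cast
  rw [hk, norm_div, norm_mul, norm_pow, Complex.norm_ofNat, div_mul_eq_mul_div]
  gcongr

lemma summable_norm_qSech {q : ℂ} (hq0 : q ≠ 0) (hq1 : ‖q‖ < 1) :
    Summable fun n ↦ ‖qSech q n‖ :=
  .of_nonneg_of_le (fun _ ↦ norm_nonneg _) (norm_qSech_le hq0 hq1)
    ((summable_pow_natAbs (norm_nonneg q) hq1).mul_left _)

/-- The bilateral sum of `qSech`, which Jacobi's two-square identity equates with `phi q ^ 2`. -/
noncomputable def qSechSum (q : ℂ) : ℂ := ∑' n, qSech q n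

lemma hasSum_qSechSum {q : ℂ} (hq0 : q ≠ 0) (hq1 : ‖q‖ < 1) :
    HasSum (qSech q) (qSechSum q) :=
  (summable_norm_qSech hq0 hq1).of_norm.hasSum

lemma tendsto_qSechSum_nhdsNE_zero : Tendsto qSechSum (𝓝[≠] 0) (𝓝 1) := by
  refine tendsto_tsum_of_norm_le_mul_pow_natAbs (C := 4) qSech_zero ?_
  filter_upwards [self_mem_nhdsWithin, eventually_norm_lt_nhdsNE_zero one_half_pos] with q hq0 hq n
  refine (norm_qSech_le hq0 (by linarith) n).trans ?_
  gcongr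
  rw [div_le_iff₀] <;> nlinarith [norm_nonneg q]

lemma qSechSum_add_qSechSum_neg {q : ℂ} (hq0 : q ≠ 0) (hq1 : ‖q‖ < 1) :
    qSechSum q + qSechSum (-q) = 2 * qSechSum (q ^ 2) := by
  have hneg := hasSum_qSechSum (neg_ne_zero.mpr hq0) (by rwa [norm_neg])
  simp only [funext (qSech_neg_left q)] at hneg
  have heven := hasSum_comp_two_mul (hasSum_qSechSum hq0 hq1) hneg
  simp only [qSech_two_mul] at heven
  have hsq : ‖q ^ 2‖ < 1 := norm_pow_lt_one hq1 two_ne_zero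
  exact heven.unique ((hasSum_qSechSum (pow_ne_zero 2 hq0) hsq).mul_left 2)

lemma tsum_neg_zpow_sq_mul_zpow {q : ℂ} (hq0 : q ≠ 0) :
    ∑' n : ℤ, (-q) ^ (n ^ 2) * q ^ n = 0 := by
  rw [← self_eq_neg, ← tsum_neg, ← (Equiv.subLeft (-1)).tsum_eq]
  refine tsum_congr fun n ↦ ?_
  have hsign : (-1 : ℂ) ^ (-1 - n) = -(-1) ^ n := by simp [neg_one_zpow_sub]
  have hexp : q ^ ((-1 - n) ^ 2) * q ^ (-1 - n) = q ^ (n ^ 2) * q ^ n := by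
    simp only [← zpow_add₀ hq0]
    ring_nf
  rw [Equiv.subLeft_apply, neg_zpow_eq_mul q, neg_zpow_eq_mul q, neg_one_zpow_sq, neg_one_zpow_sq,
    hsign, mul_assoc, hexp]
  ring

/-- The convolution of `qSech q` with the coefficients of the theta series `phi (-q)`. -/
noncomputable def qSechThetaConv (q : ℂ) (m : ℤ) : ℂ := ∑' n, qSech q n * (-q) ^ ((m - n) ^ 2)

lemma summable_qSech_mul_neg_zpow_sq {q : ℂ} (hq0 : q ≠ 0) (hq1 : ‖q‖ < 1) (m : ℤ) :
    Summable fun n ↦ qSech q n * (-q) ^ ((m - n) ^ 2) := by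
  refine .of_norm_bounded (summable_norm_qSech hq0 hq1) fun n ↦ ?_
  rw [norm_mul]
  refine mul_le_of_le_one_right (norm_nonneg _) ((norm_zpow_sq_le (by rwa [norm_neg]) _).trans ?_)
  exact pow_le_one₀ (norm_nonneg _) (by simpa using hq1.le)

lemma qSechThetaConv_add_one {q : ℂ} (hq0 : q ≠ 0) (hq1 : ‖q‖ < 1) (m : ℤ) :
    qSechThetaConv q (m + 1) = q ^ (2 * m + 1) * qSechThetaConv q m := by
  have hterm (n : ℤ) : qSech q n * (-q) ^ ((m + 1 - n) ^ 2) -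
      q ^ (2 * m + 1) * (qSech q n * (-q) ^ ((m - n) ^ 2)) =
      -2 * q ^ (m + 1) * ((-q) ^ ((m - n) ^ 2) * q ^ (m - n)) := by
    have hodd : (-q) ^ ((m + 1 - n) ^ 2) = -((-q) ^ ((m - n) ^ 2) * q ^ (2 * (m - n) + 1)) := by
      rw [show (m + 1 - n) ^ 2 = (m - n) ^ 2 + (2 * (m - n) + 1) by ring,
        zpow_add₀ (neg_ne_zero.mpr hq0), (odd_two_mul_add_one (m - n)).neg_zpow, mul_neg]
    have hsplit : q ^ (2 * (m - n) + 1) + q ^ (2 * m + 1) =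
        q ^ (m + 1) * q ^ (m - n) * (q ^ n + q ^ (-n)) := by
      rw [mul_add, ← zpow_add₀ hq0, ← zpow_add₀ hq0, ← zpow_add₀ hq0]
      ring_nf
    have hsech : qSech q n * (q ^ n + q ^ (-n)) = 2 :=
      div_mul_cancel₀ 2 (zpow_add_zpow_neg_ne_zero hq0 hq1 n)
    rw [hodd]
    linear_combination (-(-q) ^ ((m - n) ^ 2) * qSech q n) * hsplit -
      (-q) ^ ((m - n) ^ 2) * q ^ (m + 1) * q ^ (m - n) * hsech
  have hsum (m : ℤ) := summable_qSech_mul_neg_zpow_sq hq0 hq1 m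
  have hzero : ∑' n : ℤ, (-q) ^ ((m - n) ^ 2) * q ^ (m - n) = 0 :=
    ((Equiv.subLeft m).tsum_eq fun j ↦ (-q) ^ (j ^ 2) * q ^ j).trans (tsum_neg_zpow_sq_mul_zpow hq0)
  rw [← sub_eq_zero, qSechThetaConv, qSechThetaConv, ← tsum_mul_left,
    ← (hsum _).tsum_sub ((hsum m).mul_left _), tsum_congr hterm, tsum_mul_left, hzero, mul_zero]

lemma qSechThetaConv_eq_zpow_sq_mul {q : ℂ} (hq0 : q ≠ 0) (hq1 : ‖q‖ < 1) (m : ℤ) :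
    qSechThetaConv q m = q ^ (m ^ 2) * qSechThetaConv q 0 := by
  induction m using Int.induction_on with
  | zero => simp
  | succ i ih =>
    rw [qSechThetaConv_add_one hq0 hq1, ih, ← mul_assoc, ← zpow_add₀ hq0]
    ring_nf
  | pred i ih =>
    refine mul_left_cancel₀ (zpow_ne_zero (2 * (-i - 1) + 1) hq0) ?_
    rw [← qSechThetaConv_add_one hq0 hq1, sub_add_cancel, ih, ← mul_assoc, ← zpow_add₀ hq0]
    ring_nf

lemma qSechThetaConv_neg_left_zero (q : ℂ) : qSechThetaConv (-q) 0 = qSechThetaConv q 0 := by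
  refine tsum_congr fun n ↦ ?_
  rw [qSech_neg_left, neg_neg, neg_zpow_eq_mul q, neg_one_zpow_sq, zero_sub, neg_one_zpow_neg]
  ring

lemma qSechSum_mul_phi_neg {q : ℂ} (hq0 : q ≠ 0) (hq1 : ‖q‖ < 1) :
    qSechSum q * phi (-q) = qSechThetaConv q 0 * phi q := by
  have hconv := hasSum_convolution (summable_norm_qSech hq0 hq1)
    (summable_norm_zpow_sq (q := -q) (by rwa [norm_neg]))
  have hphi : HasSum (qSechThetaConv q) (phi q * qSechThetaConv q 0) :=
    ((hasSum_phi hq1).mul_right _).congr_fun (qSechThetaConv_eq_zpow_sq_mul hq0 hq1)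
  rw [phi_eq_tsum (-q), mul_comm _ (phi q)]
  exact hconv.unique hphi

lemma qSechSum_mul_phi_neg_sq {q : ℂ} (hq0 : q ≠ 0) (hq1 : ‖q‖ < 1) :
    qSechSum q * phi (-q) ^ 2 = qSechSum (-q) * phi q ^ 2 := by
  have hpos := qSechSum_mul_phi_neg hq0 hq1
  have hneg := qSechSum_mul_phi_neg (neg_ne_zero.mpr hq0) (by rwa [norm_neg])
  rw [neg_neg, qSechThetaConv_neg_left_zero] at hneg
  linear_combination phi (-q) * hpos - phi q * hneg

lemma qSechSum_div_phi_sq_comp_sq {q : ℂ} (hq0 : q ≠ 0) (hq1 : ‖q‖ < 1) :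
    qSechSum (q ^ 2) / phi (q ^ 2) ^ 2 = qSechSum q / phi q ^ 2 := by
  have hsq : ‖q ^ 2‖ < 1 := norm_pow_lt_one hq1 two_ne_zero
  rw [div_eq_div_iff (pow_ne_zero 2 (phi_ne_zero (pow_ne_zero 2 hq0) hsq))
    (pow_ne_zero 2 (phi_ne_zero hq0 hq1))]
  have hphi := phi_mul_phi_add_phi_neg_mul_phi_neg hq0 hq1 rfl
  rw [← sq q] at hphi
  linear_combination (-phi q ^ 2 / 2) * qSechSum_add_qSechSum_neg hq0 hq1 +
    (qSechSum q / 2) * hphi - (1 / 2) * qSechSum_mul_phi_neg_sq hq0 hq1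

theorem qSechSum_eq_phi_sq {q : ℂ} (hq0 : q ≠ 0) (hq1 : ‖q‖ < 1) : qSechSum q = phi q ^ 2 := by
  have hiter (k : ℕ) : qSechSum (q ^ 2 ^ k) / phi (q ^ 2 ^ k) ^ 2 = qSechSum q / phi q ^ 2 := by
    induction k with
    | zero => simp
    | succ k ih =>
      have hk : ‖q ^ 2 ^ k‖ < 1 := norm_pow_lt_one hq1 (by positivity)
      rw [pow_succ, pow_mul, qSechSum_div_phi_sq_comp_sq (pow_ne_zero _ hq0) hk, ih]
  have hlim : Tendsto (fun q ↦ qSechSum q / phi q ^ 2) (𝓝[≠] 0) (𝓝 1) := by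
    simpa [Pi.div_def] using
      tendsto_qSechSum_nhdsNE_zero.div (tendsto_phi_nhdsNE_zero.pow 2) (by simp)
  have hone := hlim.comp (tendsto_pow_two_pow_nhdsNE_zero hq0 hq1)
  simp only [Function.comp_def, hiter] at hone
  exact eq_of_div_eq_one (tendsto_nhds_unique tendsto_const_nhds hone)

/-- With `q = exp (-t)` this is the hyperbolic tangent of `n * t`; its differences are products of
values of `qSech`. -/
noncomputable def qTanh (q : ℂ) (n : ℤ) : ℂ := (q ^ (-n) - q ^ n) / (q ^ n + q ^ (-n))

lemma qTanh_neg (q : ℂ) (n : ℤ) : qTanh q (-n) = -qTanh q n := by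
  rw [qTanh, qTanh, neg_neg, add_comm, ← neg_div, neg_sub]

lemma qTanh_eq_div {q : ℂ} (hq0 : q ≠ 0) (n : ℤ) :
    qTanh q n = (1 - q ^ n * q ^ n) / (1 + q ^ n * q ^ n) := by
  have hn : q ^ n ≠ 0 := zpow_ne_zero n hq0
  rw [qTanh, zpow_neg, ← mul_div_mul_right _ (q ^ n + (q ^ n)⁻¹) hn, sub_mul, add_mul,
    inv_mul_cancel₀ hn, add_comm 1]

lemma tendsto_qTanh_atTop {q : ℂ} (hq0 : q ≠ 0) (hq1 : ‖q‖ < 1) :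
    Tendsto (qTanh q) atTop (𝓝 1) := by
  have hpow : Tendsto (fun n : ℤ ↦ q ^ n) atTop (𝓝 0) := by
    rw [← Nat.map_cast_int_atTop, tendsto_map'_iff]
    simpa [Function.comp_def] using tendsto_pow_atTop_nhds_zero_of_norm_lt_one hq1
  have hsq := hpow.mul hpow
  simp only [funext (qTanh_eq_div hq0)]
  simpa [Pi.div_def] using (tendsto_const_nhds (x := (1 : ℂ)).sub hsq).div
    (tendsto_const_nhds (x := (1 : ℂ)).add hsq) (by simp)

lemma tendsto_qTanh_atBot {q : ℂ} (hq0 : q ≠ 0) (hq1 : ‖q‖ < 1) :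
    Tendsto (qTanh q) atBot (𝓝 (-1)) :=
  ((tendsto_qTanh_atTop hq0 hq1).comp tendsto_neg_atBot_atTop).neg.congr fun n ↦ by
    simp [qTanh_neg]

lemma qTanh_sub_qTanh {q : ℂ} (hq0 : q ≠ 0) (hq1 : ‖q‖ < 1) (m n : ℤ) :
    qTanh q n - qTanh q m = (q ^ (m - n) - q ^ (n - m)) / 2 * (qSech q n * qSech q m) := by
  have hm := zpow_add_zpow_neg_ne_zero hq0 hq1 m
  have hn := zpow_add_zpow_neg_ne_zero hq0 hq1 n
  rw [qTanh, qTanh, qSech, qSech, div_sub_div _ _ hn hm, div_mul_div_comm, div_mul_div_comm,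
    div_eq_div_iff (mul_ne_zero hn hm) (mul_ne_zero two_ne_zero (mul_ne_zero hn hm)),
    sub_eq_add_neg m, sub_eq_add_neg n, zpow_add₀ hq0, zpow_add₀ hq0]
  ring

lemma summable_qSech_mul_qSech_sub {q : ℂ} (hq0 : q ≠ 0) (hq1 : ‖q‖ < 1) (k : ℤ) :
    Summable fun n ↦ qSech q n * qSech q (n - k) :=
  (summable_mul_of_summable_norm (summable_norm_qSech hq0 hq1)
    (summable_norm_qSech hq0 hq1)).comp_injective (i := fun n ↦ (n, n - k))
    fun _ _ h ↦ congrArg Prod.fst h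

lemma hasSum_qTanh_sub_qTanh {q : ℂ} (hq0 : q ≠ 0) (hq1 : ‖q‖ < 1) (k : ℤ) :
    HasSum (fun n ↦ qTanh q n - qTanh q (n - k)) (2 * k) := by
  have hsummable : Summable fun n ↦ qTanh q n - qTanh q (n + 1) := by
    have hmul := (summable_qSech_mul_qSech_sub hq0 hq1 (-1)).mul_left
      ((q ^ (1 : ℤ) - q ^ (-1 : ℤ)) / 2)
    refine hmul.congr fun n ↦ ?_
    rw [qTanh_sub_qTanh hq0 hq1]
    ring_nf
  have hval : (2 * k : ℂ) = k • (1 - (-1)) := by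
    rw [zsmul_eq_mul]
    ring
  rw [hval]
  exact hasSum_sub_shift hsummable (tendsto_qTanh_atTop hq0 hq1) (tendsto_qTanh_atBot hq0 hq1) k

lemma tsum_qSech_mul_qSech_sub {q : ℂ} (hq0 : q ≠ 0) (hq1 : ‖q‖ < 1) {k : ℤ} (hk : k ≠ 0) :
    ∑' n, qSech q n * qSech q (k - n) = 4 * (k / (q ^ (-k) - q ^ k)) := by
  have hden := zpow_neg_sub_zpow_ne_zero hq0 hq1 hk
  have hterm (n : ℤ) : qSech q n * qSech q (k - n) =
      2 / (q ^ (-k) - q ^ k) * (qTanh q n - qTanh q (n - k)) := by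
    rw [qTanh_sub_qTanh hq0 hq1, ← neg_sub n k, qSech_neg, sub_sub_cancel, sub_sub_cancel_left]
    field_simp
  rw [tsum_congr hterm, tsum_mul_left, (hasSum_qTanh_sub_qTanh hq0 hq1 k).tsum_eq]
  ring

lemma hasSum_four_mul_intCast_div_zpow_neg_sub_zpow {q : ℂ} (hq0 : q ≠ 0) (hq1 : ‖q‖ < 1) :
    HasSum (fun k : ℤ ↦ 4 * (k / (q ^ (-k) - q ^ k))) (qSechSum q ^ 2 - ∑' n, qSech q n ^ 2) := by
  have hsech := summable_norm_qSech hq0 hq1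
  have hconv := hasSum_convolution hsech hsech
  have hne := hasSum_ite_sub_hasSum hconv 0
  simp only [zero_sub, qSech_neg, ← sq] at hne
  refine hne.congr_fun fun k ↦ ?_
  split_ifs with hk
  -- The central term reads `0 / 0 = 0`.
  · simp [hk]
  · rw [tsum_qSech_mul_qSech_sub hq0 hq1 hk]

lemma summable_natCast_mul_odd_pow_pow {q : ℂ} (hq1 : ‖q‖ < 1) :
    Summable fun p : ℕ × ℕ ↦ p.2 * (q ^ (2 * p.1 + 1)) ^ p.2 := by
  have hsq : ‖q ^ 2‖ < 1 := norm_pow_lt_one hq1 two_ne_zero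
  refine .of_norm_bounded (summable_mul_of_summable_norm
    (f := fun n : ℕ ↦ ‖q ^ 2‖ ^ n) (g := fun j : ℕ ↦ j * ‖q‖ ^ j) ?_ ?_) fun ⟨n, j⟩ ↦ ?_
  · simpa using summable_geometric_of_lt_one (norm_nonneg _) hsq
  · simpa using (hasSum_coe_mul_geometric_of_norm_lt_one (r := ‖q‖) (by simpa)).summable
  rcases j.eq_zero_or_pos with rfl | hj
  · simp
  have hexp : 2 * n + j ≤ (2 * n + 1) * j := by nlinarith
  calc ‖j * (q ^ (2 * n + 1)) ^ j‖ = j * ‖q‖ ^ ((2 * n + 1) * j) := by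
        rw [norm_mul, ← pow_mul, norm_pow, Complex.norm_natCast]
    _ ≤ j * ‖q‖ ^ (2 * n + j) := by
        gcongr ?_ * ?_
        exact pow_le_pow_of_le_one (norm_nonneg q) hq1.le hexp
    _ = ‖q ^ 2‖ ^ n * (j * ‖q‖ ^ j) := by
        rw [norm_pow]
        ring

lemma inv_div_one_sub_inv_sq {K : Type*} [Field K] (x : K) :
    x⁻¹ / (1 - x⁻¹) ^ 2 = x / (1 - x) ^ 2 := by
  rcases eq_or_ne x 0 with rfl | hx
  · simp
  rw [← mul_div_mul_right _ _ (pow_ne_zero 2 hx), ← mul_pow, sub_mul, inv_mul_cancel₀ hx, one_mul,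
    ← neg_sub 1 x, neg_sq, sq, inv_mul_cancel_left₀ hx]

lemma hasSum_zpow_div_one_sub_zpow_sq {q : ℂ} (hq1 : ‖q‖ < 1) :
    HasSum (fun n : ℤ ↦ q ^ (2 * n + 1) / (1 - q ^ (2 * n + 1)) ^ 2)
      (2 * ∑' p : ℕ × ℕ, p.2 * (q ^ (2 * p.1 + 1)) ^ p.2) := by
  have hnat : HasSum (fun n : ℕ ↦ q ^ (2 * n + 1) / (1 - q ^ (2 * n + 1)) ^ 2)
      (∑' p : ℕ × ℕ, p.2 * (q ^ (2 * p.1 + 1)) ^ p.2) := by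
    have hpow (n : ℕ) : ‖q ^ (2 * n + 1)‖ < 1 := norm_pow_lt_one hq1 (by omega)
    have hfiber (n : ℕ) : HasSum (fun j : ℕ ↦ j * (q ^ (2 * n + 1)) ^ j)
        (q ^ (2 * n + 1) / (1 - q ^ (2 * n + 1)) ^ 2) :=
      hasSum_coe_mul_geometric_of_norm_lt_one (hpow n)
    exact (summable_natCast_mul_odd_pow_pow hq1).hasSum.prod_fiberwise hfiber
  rw [two_mul]
  refine HasSum.of_nat_of_neg_add_one (hnat.congr_fun fun n ↦ by norm_cast)
    (hnat.congr_fun fun n ↦ ?_)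
  rw [show 2 * -((n : ℤ) + 1) + 1 = -((2 * n + 1 : ℕ) : ℤ) by push_cast; ring, zpow_neg,
    zpow_natCast, inv_div_one_sub_inv_sq]

lemma hasSum_natCast_div_zpow_neg_sub_zpow {q : ℂ} (hq0 : q ≠ 0) (hq1 : ‖q‖ < 1) (j : ℕ) :
    HasSum (fun n : ℕ ↦ j * (q ^ (2 * n + 1)) ^ j) (j / (q ^ (-j : ℤ) - q ^ (j : ℤ))) := by
  rcases eq_or_ne j 0 with rfl | hj
  · simp
  have hj0 : q ^ j ≠ 0 := pow_ne_zero j hq0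
  have hgeom : HasSum (fun n : ℕ ↦ ((q ^ j) ^ 2) ^ n) (1 - (q ^ j) ^ 2)⁻¹ := by
    refine hasSum_geometric_of_norm_lt_one ?_
    rw [← pow_mul]
    exact norm_pow_lt_one hq1 (by omega)
  have hval : j / (q ^ (-j : ℤ) - q ^ (j : ℤ)) = j * q ^ j * (1 - (q ^ j) ^ 2)⁻¹ := by
    rw [zpow_neg, zpow_natCast, ← mul_div_mul_right _ _ hj0, sub_mul, inv_mul_cancel₀ hj0, ← sq,
      div_eq_mul_inv]
  rw [hval]
  exact (hgeom.mul_left _).congr_fun fun n ↦ by ring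

lemma hasSum_intCast_div_zpow_neg_sub_zpow {q : ℂ} (hq0 : q ≠ 0) (hq1 : ‖q‖ < 1) :
    HasSum (fun k : ℤ ↦ k / (q ^ (-k) - q ^ k))
      (2 * ∑' p : ℕ × ℕ, p.2 * (q ^ (2 * p.1 + 1)) ^ p.2) := by
  have hnat : HasSum (fun j : ℕ ↦ j / (q ^ (-j : ℤ) - q ^ (j : ℤ)))
      (∑' p : ℕ × ℕ, p.2 * (q ^ (2 * p.1 + 1)) ^ p.2) :=
    have hswap := (Equiv.prodComm ℕ ℕ).hasSum_iff.mpr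
      (summable_natCast_mul_odd_pow_pow hq1).hasSum
    hswap.prod_fiberwise (hasSum_natCast_div_zpow_neg_sub_zpow hq0 hq1)
  have hint := HasSum.of_nat_of_neg (f := fun k : ℤ ↦ (k : ℂ) / (q ^ (-k) - q ^ k))
    (by simpa using hnat) (hnat.congr_fun fun j ↦ ?_)
  · simpa [two_mul] using hint
  · rw [neg_neg, Int.cast_neg, Int.cast_natCast, ← neg_sub (q ^ (-j : ℤ)), neg_div_neg_eq]

lemma qSech_sq {q : ℂ} (hq0 : q ≠ 0) (n : ℤ) :
    qSech q n ^ 2 = 4 * (q ^ (2 * n) / (1 + q ^ (2 * n)) ^ 2) := by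
  rw [qSech_eq_div hq0, div_pow, mul_pow, mul_comm 2 n, zpow_mul, zpow_ofNat]
  ring

lemma hasSum_zpow_div_one_add_zpow_sq {q : ℂ} (hq0 : q ≠ 0) (hq1 : ‖q‖ < 1) :
    HasSum (fun n : ℤ ↦ q ^ (2 * n) / (1 + q ^ (2 * n)) ^ 2) ((∑' n, qSech q n ^ 2) / 4) := by
  have hsummable : Summable fun n ↦ qSech q n ^ 2 := by
    simpa [sq] using summable_qSech_mul_qSech_sub hq0 hq1 0
  refine (hsummable.hasSum.div_const 4).congr_fun fun n ↦ ?_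
  rw [qSech_sq hq0]
  ring

theorem hasSum_phi_pow_four_div_four {q : ℂ} (hq0 : q ≠ 0) (hq1 : ‖q‖ < 1) :
    HasSum (fun n : ℤ ↦ q ^ (2 * n + 1) / (1 - q ^ (2 * n + 1)) ^ 2 +
      q ^ (2 * n) / (1 + q ^ (2 * n)) ^ 2) (phi q ^ 4 / 4) := by
  have hlambert := (hasSum_intCast_div_zpow_neg_sub_zpow hq0 hq1).mul_left 4
  have hvalue := hlambert.unique (hasSum_four_mul_intCast_div_zpow_neg_sub_zpow hq0 hq1)
  rw [qSechSum_eq_phi_sq hq0 hq1] at hvalue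
  have hadd :=
    (hasSum_zpow_div_one_sub_zpow_sq hq1).add (hasSum_zpow_div_one_add_zpow_sq hq0 hq1)
  convert hadd using 1
  linear_combination -hvalue / 4

theorem stmt17_general (q : ℂ) (hq0 : q ≠ 0) (hq1 : ‖q‖ < 1) :
    HasSum (fun n : ℤ ↦ q ^ (10 * n + 5) / (1 - q ^ (10 * n + 5)) ^ 2 +
      q ^ (10 * n) / (1 + q ^ (10 * n)) ^ 2) (phi (q ^ 5) ^ 4 / 4) := by
  have hnorm : ‖q ^ 5‖ < 1 := norm_pow_lt_one hq1 (by norm_num)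
  refine (hasSum_phi_pow_four_div_four (pow_ne_zero 5 hq0) hnorm).congr_fun fun n ↦ ?_
  have hzpow (m : ℤ) : (q ^ 5) ^ m = q ^ (5 * m) := by rw [zpow_mul, zpow_ofNat]
  rw [hzpow, hzpow, mul_add, ← mul_assoc]
  rfl

theorem stmt17 (q : ℝ) (hq0 : 0 < q) (hq1 : q < 1) :
    (∑' n : ℤ, ((q : ℂ) ^ (10 * n + 5) / (1 - (q : ℂ) ^ (10 * n + 5)) ^ 2
        + (q : ℂ) ^ (10 * n) / (1 + (q : ℂ) ^ (10 * n)) ^ 2))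
      = phi ((q : ℂ) ^ 5) ^ 4 / 4 :=
  (stmt17_general q (by exact_mod_cast hq0.ne') (by simpa [abs_of_pos hq0])).tsum_eq
end
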